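/- arXiv:2108.13379 — 3 statements merged into one kernel-verified Lean document; each statement's English description precedes it below -/
import Mathlib

section
/- Let g be a C² field of invertible symmetric 4×4 real matrices on an open set Ω ⊆ ℝ^{1+3}, let φ ∈ C¹(Ω;ℝ) and 𝒢 = (𝒢^0,…,𝒢^3) ∈ C¹(Ω;ℝ⁴). Assume: (i) the generalized wave coordinate condition (g^{-1})^{αβ}∂_α g_{βμ} − ½(g^{-1})^{αβ}∂_μ g_{αβ} = −g_{μν}𝒢^ν holds on Ω for every μ; and (ii) the reduced Einstein–scalar field equations Ric_{μν} = 2 ∂_μφ ∂_νφ hold on Ω for all μ,ν, where Ric is the coordinate Ricci tensor of g. Then for all μ,ν ∈ {0,1,2,3} one has the identity ⧠̃_g g_{μν} = P(∂_μg,∂_νg) + Q_{μν}(∂g,∂g) + T_{μν}(∂φ,∂φ) + G_{μν}(g,𝒢) on Ω, with P, Q, T, G the explicit expressions given in the context. -/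
open MeasureTheory

noncomputable def pd (μ : Fin 4) (f : (Fin 4 → ℝ) → ℝ) (x : Fin 4 → ℝ) : ℝ :=
  fderiv ℝ f x (Pi.single μ 1)

noncomputable def pd3 (i : Fin 3) (f : (Fin 3 → ℝ) → ℝ) (x : Fin 3 → ℝ) : ℝ :=
  fderiv ℝ f x (Pi.single i 1)

noncomputable def rad (p : Fin 4 → ℝ) : ℝ := Real.sqrt (∑ i : Fin 3, (p i.succ) ^ 2)

noncomputable def rad3 (y : Fin 3 → ℝ) : ℝ := Real.sqrt (∑ i : Fin 3, (y i) ^ 2)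

noncomputable def spt (t : ℝ) (y : Fin 3 → ℝ) : Fin 4 → ℝ := ![t, y 0, y 1, y 2]

noncomputable def minkVF : Fin 11 → (Fin 4 → ℝ) → Fin 4 → ℝ :=
  ![fun _ => Pi.single 0 1,
    fun _ => Pi.single 1 1,
    fun _ => Pi.single 2 1,
    fun _ => Pi.single 3 1,
    fun p => p 1 • (Pi.single 2 1 : Fin 4 → ℝ) - p 2 • (Pi.single 1 1 : Fin 4 → ℝ),
    fun p => p 1 • (Pi.single 3 1 : Fin 4 → ℝ) - p 3 • (Pi.single 1 1 : Fin 4 → ℝ),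
    fun p => p 2 • (Pi.single 3 1 : Fin 4 → ℝ) - p 3 • (Pi.single 2 1 : Fin 4 → ℝ),
    fun p => p 0 • (Pi.single 1 1 : Fin 4 → ℝ) + p 1 • (Pi.single 0 1 : Fin 4 → ℝ),
    fun p => p 0 • (Pi.single 2 1 : Fin 4 → ℝ) + p 2 • (Pi.single 0 1 : Fin 4 → ℝ),
    fun p => p 0 • (Pi.single 3 1 : Fin 4 → ℝ) + p 3 • (Pi.single 0 1 : Fin 4 → ℝ),
    fun p => p]

noncomputable def GammaList : List (Fin 11) → ((Fin 4 → ℝ) → ℝ) → (Fin 4 → ℝ) → ℝ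
  | [] => fun f p => f p
  | k :: I => fun f p => fderiv ℝ (GammaList I f) p (minkVF k p)

noncomputable def derivNormSq (f : (Fin 4 → ℝ) → ℝ) (p : Fin 4 → ℝ) : ℝ :=
  ∑ μ : Fin 4, (pd μ f p) ^ 2

noncomputable def derivNorm (f : (Fin 4 → ℝ) → ℝ) (p : Fin 4 → ℝ) : ℝ :=
  Real.sqrt (derivNormSq f p)

noncomputable def dS (f : (Fin 4 → ℝ) → ℝ) (p : Fin 4 → ℝ) : ℝ :=
  (1 / 2) * (pd 0 f p + ∑ i : Fin 3, (p i.succ / rad p) * pd i.succ f p)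

noncomputable def dQ (f : (Fin 4 → ℝ) → ℝ) (p : Fin 4 → ℝ) : ℝ :=
  (1 / 2) * ((∑ i : Fin 3, (p i.succ / rad p) * pd i.succ f p) - pd 0 f p)

noncomputable def angSq (f : (Fin 4 → ℝ) → ℝ) (p : Fin 4 → ℝ) : ℝ :=
  (1 / 2) * (∑ i : Fin 3, ∑ j : Fin 3,
    ((p i.succ / rad p) * pd j.succ f p - (p j.succ / rad p) * pd i.succ f p) ^ 2)

noncomputable def goodNormSq (f : (Fin 4 → ℝ) → ℝ) (p : Fin 4 → ℝ) : ℝ :=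
  (dS f p) ^ 2 + angSq f p

noncomputable def goodNorm (f : (Fin 4 → ℝ) → ℝ) (p : Fin 4 → ℝ) : ℝ :=
  Real.sqrt (goodNormSq f p)

noncomputable def gradSq (f : (Fin 4 → ℝ) → ℝ) (p : Fin 4 → ℝ) : ℝ :=
  (pd 0 f p) ^ 2 + ∑ i : Fin 3, (pd i.succ f p) ^ 2

noncomputable def Lup (p : Fin 4 → ℝ) : Fin 4 → ℝ :=
  ![1, p 1 / rad p, p 2 / rad p, p 3 / rad p]

noncomputable def Llow (p : Fin 4 → ℝ) : Fin 4 → ℝ :=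
  ![-1, p 1 / rad p, p 2 / rad p, p 3 / rad p]

noncomputable def Lbup (p : Fin 4 → ℝ) : Fin 4 → ℝ :=
  ![1, -(p 1 / rad p), -(p 2 / rad p), -(p 3 / rad p)]

noncomputable def Evec : Fin 3 → (Fin 4 → ℝ) → Fin 4 → ℝ :=
  ![fun p => (p 2 / rad p) • (Pi.single 3 1 : Fin 4 → ℝ) - (p 3 / rad p) • (Pi.single 2 1 : Fin 4 → ℝ),
    fun p => (p 1 / rad p) • (Pi.single 3 1 : Fin 4 → ℝ) - (p 3 / rad p) • (Pi.single 1 1 : Fin 4 → ℝ),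
    fun p => (p 1 / rad p) • (Pi.single 2 1 : Fin 4 → ℝ) - (p 2 / rad p) • (Pi.single 1 1 : Fin 4 → ℝ)]

noncomputable def frameVF : Fin 5 → (Fin 4 → ℝ) → Fin 4 → ℝ :=
  ![Lup, Lbup, Evec 0, Evec 1, Evec 2]

noncomputable def mInv : Fin 4 → Fin 4 → ℝ :=
  fun α β => if α = β then (if α = 0 then -1 else 1) else 0

noncomputable def wgt (γ q : ℝ) : ℝ :=
  if 0 ≤ q then 1 + (1 + |q|) ^ (1 + 2 * γ) else 1 + (1 + |q|) ^ (-(γ / 2))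

noncomputable def wgt' (γ q : ℝ) : ℝ :=
  if 0 ≤ q then (1 + 2 * γ) * (1 + |q|) ^ (2 * γ) else (γ / 2) * (1 + |q|) ^ (-(γ / 2) - 1)

noncomputable def matNorm (H : (Fin 4 → ℝ) → Fin 4 → Fin 4 → ℝ) (p : Fin 4 → ℝ) : ℝ :=
  Real.sqrt (∑ α : Fin 4, ∑ β : Fin 4, (H p α β) ^ 2)

noncomputable def matLL (H : (Fin 4 → ℝ) → Fin 4 → Fin 4 → ℝ) (p : Fin 4 → ℝ) : ℝ :=
  |∑ α : Fin 4, ∑ β : Fin 4, H p α β * Llow p α * Llow p β|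

noncomputable def dmatNorm (H : (Fin 4 → ℝ) → Fin 4 → Fin 4 → ℝ) (p : Fin 4 → ℝ) : ℝ :=
  Real.sqrt (∑ c : Fin 4, ∑ α : Fin 4, ∑ β : Fin 4, (pd c (fun y => H y α β) p) ^ 2)

noncomputable def dmatLL (H : (Fin 4 → ℝ) → Fin 4 → Fin 4 → ℝ) (p : Fin 4 → ℝ) : ℝ :=
  Real.sqrt (∑ u : Fin 5,
    (∑ α : Fin 4, ∑ β : Fin 4,
      fderiv ℝ (fun y => H y α β) p (frameVF u p) * Llow p α * Llow p β) ^ 2)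

noncomputable def gdmatNorm (H : (Fin 4 → ℝ) → Fin 4 → Fin 4 → ℝ) (p : Fin 4 → ℝ) : ℝ :=
  Real.sqrt (∑ α : Fin 4, ∑ β : Fin 4, goodNormSq (fun y => H y α β) p)

/-- Christoffel symbols of `g` in coordinates. -/
noncomputable def Chr (g ginv : (Fin 4 → ℝ) → Fin 4 → Fin 4 → ℝ) (x : Fin 4 → ℝ)
    (l μ ν : Fin 4) : ℝ :=
  (1 / 2) * (∑ σ : Fin 4, ginv x l σ *
    (pd μ (fun y => g y ν σ) x + pd ν (fun y => g y μ σ) x - pd σ (fun y => g y μ ν) x))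

/-- The coordinate Ricci tensor of `g`. -/
noncomputable def RicCoord (g ginv : (Fin 4 → ℝ) → Fin 4 → Fin 4 → ℝ) (x : Fin 4 → ℝ)
    (μ ν : Fin 4) : ℝ :=
  (∑ a : Fin 4, pd a (fun y => Chr g ginv y a μ ν) x)
    - (∑ a : Fin 4, pd ν (fun y => Chr g ginv y a a μ) x)
    + (∑ a : Fin 4, ∑ b : Fin 4, Chr g ginv x a μ ν * Chr g ginv x b a b)
    - (∑ a : Fin 4, ∑ b : Fin 4, Chr g ginv x a μ b * Chr g ginv x b ν a)

/-- The reduced wave operator `⧠̃_g = (g^{-1})^{αβ} ∂²_{αβ}`. -/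
noncomputable def redBox (ginv : (Fin 4 → ℝ) → Fin 4 → Fin 4 → ℝ)
    (f : (Fin 4 → ℝ) → ℝ) (x : Fin 4 → ℝ) : ℝ :=
  ∑ α : Fin 4, ∑ β : Fin 4, ginv x α β * pd α (fun y => pd β f y) x

/-- The term `P(∂_μ g, ∂_ν g)`. -/
noncomputable def Pterm (g ginv : (Fin 4 → ℝ) → Fin 4 → Fin 4 → ℝ) (x : Fin 4 → ℝ)
    (μ ν : Fin 4) : ℝ :=
  (1 / 4) * (∑ a : Fin 4, ∑ a' : Fin 4, ∑ b : Fin 4, ∑ b' : Fin 4,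
      ginv x a a' * pd μ (fun y => g y a a') x * (ginv x b b' * pd ν (fun y => g y b b') x))
    - (1 / 2) * (∑ a : Fin 4, ∑ a' : Fin 4, ∑ b : Fin 4, ∑ b' : Fin 4,
      ginv x a a' * pd μ (fun y => g y a b) x * (ginv x b b' * pd ν (fun y => g y a' b') x))

/-- The term `Q_{μν}(∂g, ∂g)`. -/
noncomputable def Qterm (g ginv : (Fin 4 → ℝ) → Fin 4 → Fin 4 → ℝ) (x : Fin 4 → ℝ)
    (μ ν : Fin 4) : ℝ :=
  (∑ a : Fin 4, ∑ a' : Fin 4, ∑ b : Fin 4, ∑ b' : Fin 4,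
      pd a (fun y => g y b μ) x * ginv x a a' * ginv x b b' * pd a' (fun y => g y b' ν) x)
    - (∑ a : Fin 4, ∑ a' : Fin 4, ∑ b : Fin 4, ∑ b' : Fin 4,
      ginv x a a' * ginv x b b' *
        (pd a (fun y => g y b μ) x * pd b' (fun y => g y a' ν) x
          - pd b' (fun y => g y b μ) x * pd a (fun y => g y a' ν) x))
    + (∑ a : Fin 4, ∑ a' : Fin 4, ∑ b : Fin 4, ∑ b' : Fin 4,
      ginv x a a' * ginv x b b' *
        (pd μ (fun y => g y a' b') x * pd a (fun y => g y b ν) x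
          - pd a (fun y => g y a' b') x * pd μ (fun y => g y b ν) x))
    + (∑ a : Fin 4, ∑ a' : Fin 4, ∑ b : Fin 4, ∑ b' : Fin 4,
      ginv x a a' * ginv x b b' *
        (pd ν (fun y => g y a' b') x * pd a (fun y => g y b μ) x
          - pd a (fun y => g y a' b') x * pd ν (fun y => g y b μ) x))
    + (1 / 2) * (∑ a : Fin 4, ∑ a' : Fin 4, ∑ b : Fin 4, ∑ b' : Fin 4,
      ginv x a a' * ginv x b b' *
        (pd b' (fun y => g y a a') x * pd μ (fun y => g y b ν) x
          - pd μ (fun y => g y a a') x * pd b' (fun y => g y b ν) x))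
    + (1 / 2) * (∑ a : Fin 4, ∑ a' : Fin 4, ∑ b : Fin 4, ∑ b' : Fin 4,
      ginv x a a' * ginv x b b' *
        (pd b' (fun y => g y a a') x * pd ν (fun y => g y b μ) x
          - pd ν (fun y => g y a a') x * pd b' (fun y => g y b μ) x))

/-- The term `T_{μν}(∂φ, ∂φ) = −4 ∂_μφ ∂_νφ`. -/
noncomputable def Tterm (φ : (Fin 4 → ℝ) → ℝ) (x : Fin 4 → ℝ) (μ ν : Fin 4) : ℝ :=
  -4 * pd μ φ x * pd ν φ x

/-- The gauge term `G_{μν}(g, 𝒢)`. -/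
noncomputable def Gterm (g : (Fin 4 → ℝ) → Fin 4 → Fin 4 → ℝ)
    (Gc : (Fin 4 → ℝ) → Fin 4 → ℝ) (x : Fin 4 → ℝ) (μ ν : Fin 4) : ℝ :=
  - pd μ (fun y => ∑ l : Fin 4, g y ν l * Gc y l) x
    - pd ν (fun y => ∑ l : Fin 4, g y μ l * Gc y l) x
    - (∑ a : Fin 4, Gc x a * pd a (fun y => g y μ ν) x)
    - (∑ a : Fin 4, ∑ b : Fin 4, g x a ν * g x b μ * Gc x a * Gc x b)

namespace RedEin

open Finset

def S (h : Fin 4 → Fin 4 → ℝ) (f : Fin 4 → Fin 4 → Fin 4 → Fin 4 → ℝ) : ℝ :=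
  ∑ a, ∑ A, ∑ b, ∑ B, h a A * h b B * f a A b B

lemma S_swap1 {h : Fin 4 → Fin 4 → ℝ} (hs : ∀ a b, h a b = h b a) (f) :
    S h f = S h (fun a A b B => f A a b B) := by
  unfold S
  rw [Finset.sum_comm]
  refine sum_congr rfl fun a _ => sum_congr rfl fun A _ => sum_congr rfl fun b _ =>
    sum_congr rfl fun B _ => ?_
  rw [hs A a]

lemma S_swap2 {h : Fin 4 → Fin 4 → ℝ} (hs : ∀ a b, h a b = h b a) (f) :
    S h f = S h (fun a A b B => f a A B b) := by
  unfold S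
  refine sum_congr rfl fun a _ => sum_congr rfl fun A _ => ?_
  rw [Finset.sum_comm]
  refine sum_congr rfl fun b _ => sum_congr rfl fun B _ => ?_
  rw [hs B b]

lemma S_swap3 {h : Fin 4 → Fin 4 → ℝ} (f) :
    S h f = S h (fun a A b B => f b B a A) := by
  unfold S
  simp only [← Finset.sum_product' (univ : Finset (Fin 4)) (univ : Finset (Fin 4))]
  conv_rhs => rw [Finset.sum_comm]
  refine sum_congr rfl fun a _ => sum_congr rfl fun A _ => ?_
  ring

lemma S_add {h : Fin 4 → Fin 4 → ℝ} (f f') :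
    S h (fun a A b B => f a A b B + f' a A b B) = S h f + S h f' := by
  simp only [S, mul_add, sum_add_distrib]

lemma S_smul {h : Fin 4 → Fin 4 → ℝ} (c : ℝ) (f) :
    S h (fun a A b B => c * f a A b B) = c * S h f := by
  simp only [S, mul_sum]
  refine sum_congr rfl fun a _ => sum_congr rfl fun A _ => sum_congr rfl fun b _ =>
    sum_congr rfl fun B _ => ?_
  ring

lemma S_zero {h : Fin 4 → Fin 4 → ℝ} (hs : ∀ a b, h a b = h b a) (f)
    (hf : ∀ a A b B, f a A b B + f A a b B + f a A B b + f A a B b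
      + f b B a A + f B b a A + f b B A a + f B b A a = 0) : S h f = 0 := by
  have e1 := S_swap1 hs f
  have e2 := S_swap2 hs f
  have e3 := S_swap1 hs (fun a A b B => f a A B b)
  have e4 := S_swap3 (h := h) f
  have e5 := S_swap3 (h := h) (fun a A b B => f A a b B)
  have e6 := S_swap3 (h := h) (fun a A b B => f a A B b)
  have e7 := S_swap3 (h := h) (fun a A b B => f A a B b)
  have z : S h (fun a A b B => f a A b B + f A a b B + f a A B b + f A a B b
      + f b B a A + f B b a A + f b B A a + f B b A a) = 0 := by
    simp only [hf]; simp [S]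
  simp only [S_add (h := h)] at z
  linarith

def L (h : Fin 4 → Fin 4 → ℝ) (f : Fin 4 → Fin 4 → ℝ) : ℝ := ∑ a, ∑ b, h a b * f a b

lemma L_zero {h : Fin 4 → Fin 4 → ℝ} (hs : ∀ a b, h a b = h b a) (f)
    (hf : ∀ a b, f a b + f b a = 0) : L h f = 0 := by
  have e : L h f = L h (fun a b => f b a) := by
    unfold L
    rw [Finset.sum_comm]
    refine sum_congr rfl fun a _ => sum_congr rfl fun b _ => ?_
    rw [hs]
  have z : L h (fun a b => f a b + f b a) = 0 := by
    simp only [hf]; simp [L]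
  have z' : L h (fun a b => f a b + f b a) = L h f + L h (fun a b => f b a) := by
    simp only [L, mul_add, sum_add_distrib]
  linarith

/-- pointwise Christoffel bracket -/
def C (d : Fin 4 → Fin 4 → Fin 4 → ℝ) (m n s : Fin 4) : ℝ := d m n s + d n m s - d s m n

lemma dh_contract (h : Fin 4 → Fin 4 → ℝ) (X : Fin 4 → Fin 4 → Fin 4 → ℝ)
    (Y : Fin 4 → Fin 4 → ℝ) :
    ∑ a, ∑ s, (-∑ p, ∑ q, h a p * X a p q * h q s) * Y a s
      = - S h (fun a p q s => X a p q * Y a s) := by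
  unfold S
  simp only [neg_mul, sum_neg_distrib, sum_mul]
  congr 1
  refine sum_congr rfl fun a _ => ?_
  rw [sum_comm]
  refine sum_congr rfl fun p _ => ?_
  rw [sum_comm]
  refine sum_congr rfl fun q _ => sum_congr rfl fun s _ => ?_
  ring

lemma prod_contract (h : Fin 4 → Fin 4 → ℝ) (X Y : Fin 4 → Fin 4 → Fin 4 → ℝ) :
    ∑ a, ∑ b, ((1 / 2) * ∑ s, h a s * X a b s) * ((1 / 2) * ∑ t, h b t * Y a b t)
      = (1 / 4) * S h (fun a s b t => X a b s * Y a b t) := by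
  unfold S
  rw [mul_sum]
  refine sum_congr rfl fun a _ => ?_
  rw [sum_comm, mul_sum]
  refine sum_congr rfl fun b _ => ?_
  rw [mul_mul_mul_comm, sum_mul_sum, mul_sum, mul_sum]
  refine sum_congr rfl fun s _ => ?_
  rw [mul_sum, mul_sum]
  refine sum_congr rfl fun t _ => ?_
  ring

lemma LL (h : Fin 4 → Fin 4 → ℝ) (X Y : Fin 4 → Fin 4 → ℝ) :
    L h X * L h Y = S h (fun a A b B => X a A * Y b B) := by
  unfold L S
  simp only [mul_sum, sum_mul]
  simp only [← Finset.sum_product' (univ : Finset (Fin 4)) (univ : Finset (Fin 4))]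
  rw [sum_comm]
  refine sum_congr rfl fun a _ => sum_congr rfl fun A _ => ?_
  ring

/-- the pointwise identity -/
lemma alg (h : Fin 4 → Fin 4 → ℝ) (hs : ∀ a b, h a b = h b a)
    (d : Fin 4 → Fin 4 → Fin 4 → ℝ) (hd : ∀ a b c, d a b c = d a c b)
    (D : Fin 4 → Fin 4 → Fin 4 → Fin 4 → ℝ) (hD1 : ∀ a b c e, D a b c e = D b a c e)
    (hD2 : ∀ a b c e, D a b c e = D a b e c) (m n : Fin 4) :
    L h (fun a b => D a b m n)
      = ((1 / 4) * S h (fun a A b B => d m a A * d n b B)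
        - (1 / 2) * S h (fun a A b B => d m a b * d n A B))
      + (S h (fun a A b B => d a b m * d A B n)
        - S h (fun a A b B => d a b m * d B A n - d B b m * d a A n)
        + S h (fun a A b B => d m A B * d a b n - d a A B * d m b n)
        + S h (fun a A b B => d n A B * d a b m - d a A B * d n b m)
        + (1 / 2) * S h (fun a A b B => d B a A * d m b n - d m a A * d B b n)
        + (1 / 2) * S h (fun a A b B => d B a A * d n b m - d n a A * d B b m))
      - 2 * ((1 / 2) * (- S h (fun a p q s => d a p q * C d m n s)
              + L h (fun a s => D a m n s + D a n m s - D a s m n))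
        - (1 / 2) * (- S h (fun a p q s => d n p q * C d a m s)
              + L h (fun a s => D n a m s + D n m a s - D n s a m))
        + (1 / 4) * S h (fun a s b t => C d m n s * C d a b t)
        - (1 / 4) * S h (fun a s b t => C d m b s * C d n a t))
      + (- S h (fun a p q s => d m p q * (d a s n - (1 / 2) * d n a s))
          + L h (fun a s => D m a s n - (1 / 2) * D m n a s))
      + (- S h (fun a p q s => d n p q * (d a s m - (1 / 2) * d m a s))
          + L h (fun a s => D n a s m - (1 / 2) * D n m a s))
      + S h (fun a s p q => d a m n * (d p q s - (1 / 2) * d s p q))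
      - S h (fun a A b B => (d a A m - (1 / 2) * d m a A) * (d b B n - (1 / 2) * d n b B)) := by
  have hS : S h (fun a A b B => ((1 / 4) * (d m a A * d n b B)
        - (1 / 2) * (d m a b * d n A B))
      + ((d a b m * d A B n)
        - (d a b m * d B A n - d B b m * d a A n)
        + (d m A B * d a b n - d a A B * d m b n)
        + (d n A B * d a b m - d a A B * d n b m)
        + (1 / 2) * (d B a A * d m b n - d m a A * d B b n)
        + (1 / 2) * (d B a A * d n b m - d n a A * d B b m))
      - 2 * ((1 / 2) * (- (d a A b * C d m n B))
        - (1 / 2) * (- (d n A b * C d a m B))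
        + (1 / 4) * (C d m n A * C d a b B)
        - (1 / 4) * (C d m b A * C d n a B))
      + (- (d m A b * (d a B n - (1 / 2) * d n a B)))
      + (- (d n A b * (d a B m - (1 / 2) * d m a B)))
      + (d a m n * (d b B A - (1 / 2) * d A b B))
      - ((d a A m - (1 / 2) * d m a A) * (d b B n - (1 / 2) * d n b B))) = 0 := by
    apply S_zero hs
    intro a A b B
    obtain ⟨e, he⟩ : ∃ e : Fin 4 → Fin 4 → Fin 4 → ℝ, ∀ a b c, d a b c = e a b c + e a c b :=
      ⟨fun a b c => d a b c / 2, fun a b c => by simp only [hd a c b]; ring⟩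
    simp only [C, he]
    ring
  have hL : L h (fun a b => D a b m n
      + (D a m n b + D a n m b - D a b m n)
      - (D n a m b + D n m a b - D n b a m)
      - (D m a b n - (1 / 2) * D m n a b)
      - (D n a b m - (1 / 2) * D n m a b)) = 0 := by
    apply L_zero hs
    intro a b
    obtain ⟨e, he⟩ : ∃ e : Fin 4 → Fin 4 → Fin 4 → Fin 4 → ℝ, ∀ a b c f,
        D a b c f = e a b c f + e b a c f + e a b f c + e b a f c :=
      ⟨fun a b c f => D a b c f / 4, fun a b c f => by
        simp only [hD2 _ _ f c]; rw [hD1 b a c f]; ring⟩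
    simp only [he]
    ring
  have S_neg : ∀ f, S h (fun a A b B => - f a A b B) = - S h f := by
    intro f; simp only [S, mul_neg, sum_neg_distrib]
  have S_sub : ∀ f f', S h (fun a A b B => f a A b B - f' a A b B) = S h f - S h f' := by
    intro f f'; simp only [S, mul_sub, sum_sub_distrib]
  have L_add : ∀ f f', L h (fun a b => f a b + f' a b) = L h f + L h f' := by
    intro f f'; simp only [L, mul_add, sum_add_distrib]
  have L_sub : ∀ f f', L h (fun a b => f a b - f' a b) = L h f - L h f' := by
    intro f f'; simp only [L, mul_sub, sum_sub_distrib]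
  simp only [S_sub, S_add, S_smul, S_neg] at hS ⊢
  rw [L_sub, L_sub, L_sub, L_add] at hL
  linarith

end RedEin

namespace RedEin

open Finset Filter Topology

lemma pd_congr {μ : Fin 4} {f f' : (Fin 4 → ℝ) → ℝ} {x} (e : f =ᶠ[𝓝 x] f') :
    pd μ f x = pd μ f' x := by
  unfold pd; rw [e.fderiv_eq]

lemma pd_congr_on {Ω : Set (Fin 4 → ℝ)} (hΩ : IsOpen Ω) {μ : Fin 4} {f f' : (Fin 4 → ℝ) → ℝ} {x}
    (hx : x ∈ Ω) (e : ∀ y ∈ Ω, f y = f' y) :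
    pd μ f x = pd μ f' x :=
  pd_congr (by filter_upwards [hΩ.mem_nhds hx] with y hy using e y hy)

lemma pd_add {μ : Fin 4} {f f' : (Fin 4 → ℝ) → ℝ} {x} (hf : DifferentiableAt ℝ f x)
    (hf' : DifferentiableAt ℝ f' x) :
    pd μ (fun y => f y + f' y) x = pd μ f x + pd μ f' x := by
  unfold pd; rw [fderiv_fun_add hf hf']; rfl

lemma pd_sub {μ : Fin 4} {f f' : (Fin 4 → ℝ) → ℝ} {x} (hf : DifferentiableAt ℝ f x)
    (hf' : DifferentiableAt ℝ f' x) :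
    pd μ (fun y => f y - f' y) x = pd μ f x - pd μ f' x := by
  unfold pd; rw [fderiv_fun_sub hf hf']; rfl

lemma pd_neg {μ : Fin 4} {f : (Fin 4 → ℝ) → ℝ} {x} :
    pd μ (fun y => - f y) x = - pd μ f x := by
  unfold pd; rw [fderiv_fun_neg]; rfl

lemma pd_mul {μ : Fin 4} {f f' : (Fin 4 → ℝ) → ℝ} {x} (hf : DifferentiableAt ℝ f x)
    (hf' : DifferentiableAt ℝ f' x) :
    pd μ (fun y => f y * f' y) x = pd μ f x * f' x + f x * pd μ f' x := by
  unfold pd; rw [fderiv_fun_mul hf hf']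
  simp; ring

lemma pd_const {μ : Fin 4} {c : ℝ} {x} : pd μ (fun _ => c) x = 0 := by
  unfold pd; simp

lemma pd_cmul {μ : Fin 4} {c : ℝ} {f : (Fin 4 → ℝ) → ℝ} {x} (hf : DifferentiableAt ℝ f x) :
    pd μ (fun y => c * f y) x = c * pd μ f x := by
  rw [pd_mul (by fun_prop) hf, pd_const]; ring

lemma pd_sum {μ : Fin 4} {f : Fin 4 → (Fin 4 → ℝ) → ℝ} {x}
    (hf : ∀ i, DifferentiableAt ℝ (f i) x) :
    pd μ (fun y => ∑ i, f i y) x = ∑ i, pd μ (f i) x := by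
  unfold pd; rw [fderiv_fun_sum (fun i _ => hf i)]; simp

lemma pd_diff {b : Fin 4} {f : (Fin 4 → ℝ) → ℝ} {x} (hf : ContDiffAt ℝ 2 f x) :
    DifferentiableAt ℝ (fun y => pd b f y) x := by
  unfold pd
  have : ContDiffAt ℝ 1 (fderiv ℝ f) x := hf.fderiv_right (by norm_num)
  exact (this.differentiableAt (by norm_num)).clm_apply (by fun_prop)

lemma pd_comm {a b : Fin 4} {f : (Fin 4 → ℝ) → ℝ} {x} (hf : ContDiffAt ℝ 2 f x) :
    pd a (fun y => pd b f y) x = pd b (fun y => pd a f y) x := by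
  have h1 : ContDiffAt ℝ 1 (fderiv ℝ f) x := hf.fderiv_right (by norm_num)
  have h2 := h1.differentiableAt (by norm_num)
  have key : ∀ a b : Fin 4, pd a (fun y => pd b f y) x
      = fderiv ℝ (fderiv ℝ f) x (Pi.single a 1) (Pi.single b 1) := by
    intro a b
    unfold pd
    rw [fderiv_clm_apply h2 (by fun_prop)]
    simp
  rw [key, key]
  exact (hf.isSymmSndFDerivAt (by simp)) _ _

lemma det_diff {x : Fin 4 → ℝ} (M : (Fin 4 → ℝ) → Matrix (Fin 4) (Fin 4) ℝ)
    (hM : ∀ i j, DifferentiableAt ℝ (fun y => M y i j) x) :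
    DifferentiableAt ℝ (fun y => (M y).det) x := by
  simp only [Matrix.det_apply']
  refine DifferentiableAt.fun_sum fun σ _ => DifferentiableAt.mul (by fun_prop) ?_
  simp only [Fin.prod_univ_four]
  exact (((hM _ _).fun_mul (hM _ _)).fun_mul (hM _ _)).fun_mul (hM _ _)

lemma ginv_diff {Ω : Set (Fin 4 → ℝ)} (hΩ : IsOpen Ω)
    (g ginv : (Fin 4 → ℝ) → Fin 4 → Fin 4 → ℝ)
    (hginv : ∀ x ∈ Ω, ∀ α ν : Fin 4,
      (∑ β : Fin 4, ginv x α β * g x β ν) = if α = ν then 1 else 0) {x} (hx : x ∈ Ω)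
    (hg : ∀ a b, DifferentiableAt ℝ (fun y => g y a b) x) (a b : Fin 4) :
    DifferentiableAt ℝ (fun y => ginv y a b) x := by
  have hmul : ∀ y ∈ Ω, (Matrix.of (ginv y)) * (Matrix.of (g y)) = 1 := by
    intro y hy
    ext i j
    rw [Matrix.mul_apply, Matrix.one_apply]
    exact hginv y hy i j
  have hdet : ∀ y ∈ Ω, (Matrix.of (g y)).det ≠ 0 := by
    intro y hy h0
    have := congrArg Matrix.det (hmul y hy)
    rw [Matrix.det_mul, h0] at this
    simp at this
  have heq : ∀ y ∈ Ω, ginv y a b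
      = ((Matrix.of (g y)).det)⁻¹ * ((Matrix.of (g y)).updateRow b (Pi.single a 1)).det := by
    intro y hy
    have h1 := Matrix.inv_eq_left_inv (hmul y hy)
    have h2 : ginv y a b = (Matrix.of (ginv y)) a b := rfl
    rw [h2, ← h1, Matrix.inv_def, Matrix.smul_apply, Matrix.adjugate_apply]
    simp
  have : DifferentiableAt ℝ (fun y => ((Matrix.of (g y)).det)⁻¹ *
      ((Matrix.of (g y)).updateRow b (Pi.single a 1)).det) x := by
    refine DifferentiableAt.mul (DifferentiableAt.inv (det_diff _ hg) (hdet x hx)) (det_diff _ ?_)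
    intro i j
    by_cases hi : i = b
    · subst hi; simp
    · simp only [Matrix.updateRow_ne hi]; exact hg i j
  refine this.congr_of_eventuallyEq ?_
  filter_upwards [hΩ.mem_nhds hx] with y hy using heq y hy

lemma h_symm {g h : Fin 4 → Fin 4 → ℝ} (hg : ∀ a b, g a b = g b a)
    (hinv : ∀ α ν : Fin 4, (∑ β : Fin 4, h α β * g β ν) = if α = ν then 1 else 0) (a b : Fin 4) :
    h a b = h b a := by
  have hmul : (Matrix.of h) * (Matrix.of g) = 1 := by
    ext i j
    rw [Matrix.mul_apply, Matrix.one_apply]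
    exact hinv i j
  have hgt : (Matrix.of g).transpose = Matrix.of g := by ext i j; exact hg j i
  have h1 := Matrix.inv_eq_left_inv hmul
  have h2 : (Matrix.of h).transpose = Matrix.of h := by
    rw [← h1, Matrix.transpose_nonsing_inv, hgt]
  exact congrFun (congrFun h2 b) a

lemma dh_eq {g h d dh : Fin 4 → Fin 4 → ℝ}
    (hinv : ∀ α ν : Fin 4, (∑ β : Fin 4, h α β * g β ν) = if α = ν then 1 else 0)
    (hd : ∀ α ν : Fin 4, (∑ β : Fin 4, (dh α β * g β ν + h α β * d β ν)) = 0) (a b : Fin 4) :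
    dh a b = - ∑ p, ∑ q, h a p * d p q * h q b := by
  have hmul : (Matrix.of h) * (Matrix.of g) = 1 := by
    ext i j
    rw [Matrix.mul_apply, Matrix.one_apply]
    exact hinv i j
  have h1 : Matrix.of dh * Matrix.of g + Matrix.of h * Matrix.of d = 0 := by
    ext i j
    rw [Matrix.add_apply, Matrix.mul_apply, Matrix.mul_apply, ← sum_add_distrib]
    exact hd i j
  have h2 : Matrix.of dh = - (Matrix.of h * Matrix.of d * Matrix.of h) := by
    have h3 := congrArg (· * Matrix.of h) h1
    simp only [add_mul, zero_mul, Matrix.mul_assoc, mul_eq_one_comm.mp hmul, mul_one] at h3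
    rw [Matrix.mul_assoc]
    exact eq_neg_of_add_eq_zero_left h3
  have h4 := congrFun (congrFun h2 a) b
  simp only [Matrix.neg_apply, Matrix.mul_apply, Matrix.of_apply, sum_mul] at h4
  rw [h4, sum_comm]

end RedEin

/-- Under the generalized wave coordinate condition and the reduced
Einstein–scalar field equations `Ric_{μν} = 2 ∂_μφ ∂_νφ`, the metric components satisfy
`⧠̃_g g_{μν} = P + Q + T + G` on `Ω`. -/
theorem stmt0 (Ω : Set (Fin 4 → ℝ)) (hΩ : IsOpen Ω)
    (g ginv : (Fin 4 → ℝ) → Fin 4 → Fin 4 → ℝ)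
    (φ : (Fin 4 → ℝ) → ℝ) (Gc : (Fin 4 → ℝ) → Fin 4 → ℝ)
    (hgsymm : ∀ x ∈ Ω, ∀ μ ν : Fin 4, g x μ ν = g x ν μ)
    (hginv : ∀ x ∈ Ω, ∀ α ν : Fin 4,
      (∑ β : Fin 4, ginv x α β * g x β ν) = if α = ν then 1 else 0)
    (hgreg : ∀ μ ν : Fin 4, ContDiffOn ℝ 2 (fun y => g y μ ν) Ω)
    (hφreg : ContDiffOn ℝ 1 φ Ω)
    (hGreg : ∀ μ : Fin 4, ContDiffOn ℝ 1 (fun y => Gc y μ) Ω)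
    (hwave : ∀ x ∈ Ω, ∀ μ : Fin 4,
      (∑ α : Fin 4, ∑ β : Fin 4, ginv x α β * pd α (fun y => g y β μ) x)
          - (1 / 2) * (∑ α : Fin 4, ∑ β : Fin 4, ginv x α β * pd μ (fun y => g y α β) x)
        = - ∑ ν : Fin 4, g x μ ν * Gc x ν)
    (hric : ∀ x ∈ Ω, ∀ μ ν : Fin 4, RicCoord g ginv x μ ν = 2 * pd μ φ x * pd ν φ x) :
    ∀ x ∈ Ω, ∀ μ ν : Fin 4,
      redBox ginv (fun y => g y μ ν) x
        = Pterm g ginv x μ ν + Qterm g ginv x μ ν + Tterm φ x μ ν + Gterm g Gc x μ ν := by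
  intro x hx m n
  have hgC : ∀ a b, ContDiffAt ℝ 2 (fun y => g y a b) x := fun a b =>
    (hgreg a b).contDiffAt (hΩ.mem_nhds hx)
  have hgd : ∀ a b, DifferentiableAt ℝ (fun y => g y a b) x := fun a b =>
    (hgC a b).differentiableAt (by norm_num)
  have hhd : ∀ a b, DifferentiableAt ℝ (fun y => ginv y a b) x :=
    RedEin.ginv_diff hΩ g ginv hginv hx hgd
  have hdd : ∀ c a b, DifferentiableAt ℝ (fun y => pd c (fun z => g z a b) y) x := fun c a b =>
    RedEin.pd_diff (hgC a b)
  have hs := RedEin.h_symm (hgsymm x hx) (hginv x hx)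
  have hdS : ∀ y ∈ Ω, ∀ a b c, pd a (fun z => g z b c) y = pd a (fun z => g z c b) y :=
    fun y hy a b c => RedEin.pd_congr_on hΩ hy (fun z hz => hgsymm z hz b c)
  have hdh : ∀ c a b, pd c (fun y => ginv y a b) x
      = - ∑ p, ∑ q, ginv x a p * pd c (fun y => g y p q) x * ginv x q b := by
    intro c a b
    refine RedEin.dh_eq (g := g x) (h := ginv x) (d := fun p q => pd c (fun y => g y p q) x)
      (dh := fun a b => pd c (fun y => ginv y a b) x) (hginv x hx) ?_ a b
    intro α ν
    have e : pd c (fun y => ∑ β, ginv y α β * g y β ν) x = 0 := by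
      rw [RedEin.pd_congr_on hΩ hx (fun y hy => hginv y hy α ν), RedEin.pd_const]
    rw [RedEin.pd_sum (fun i => (hhd _ _).fun_mul (hgd _ _))] at e
    rw [← e]
    exact Finset.sum_congr rfl fun β _ => (RedEin.pd_mul (hhd _ _) (hgd _ _)).symm
  have key := RedEin.alg (ginv x) hs (fun a b c => pd a (fun y => g y b c) x) (hdS x hx)
    (fun a b c e => pd a (fun y => pd b (fun z => g z c e) y) x)
    (fun a b c e => RedEin.pd_comm (hgC c e))
    (fun a b c e => RedEin.pd_congr_on hΩ hx (fun y hy => hdS y hy b c e)) m n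
  -- derivative of Christoffel symbols
  have hchr : ∀ c l μ ν, pd c (fun y => Chr g ginv y l μ ν) x
      = (1 / 2) * ∑ σ, (pd c (fun y => ginv y l σ) x
            * RedEin.C (fun a b c => pd a (fun y => g y b c) x) μ ν σ
          + ginv x l σ * (pd c (fun y => pd μ (fun z => g z ν σ) y) x
            + pd c (fun y => pd ν (fun z => g z μ σ) y) x
            - pd c (fun y => pd σ (fun z => g z μ ν) y) x)) := by
    intro c l μ ν
    unfold Chr
    have hC : ∀ σ, DifferentiableAt ℝ (fun y => pd μ (fun z => g z ν σ) y
        + pd ν (fun z => g z μ σ) y - pd σ (fun z => g z μ ν) y) x := fun σ =>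
      ((hdd _ _ _).fun_add (hdd _ _ _)).fun_sub (hdd _ _ _)
    rw [RedEin.pd_cmul (DifferentiableAt.fun_sum fun σ _ => (hhd _ _).fun_mul (hC σ)),
      RedEin.pd_sum (fun σ => (hhd _ _).fun_mul (hC σ))]
    congr 1
    refine Finset.sum_congr rfl fun σ _ => ?_
    rw [RedEin.pd_mul (hhd _ _) (hC σ), RedEin.pd_sub ((hdd _ _ _).fun_add (hdd _ _ _)) (hdd _ _ _),
      RedEin.pd_add (hdd _ _ _) (hdd _ _ _)]
    rfl
  have hR := hric x hx m n
  unfold RicCoord at hR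
  have hR3 : ∑ a, ∑ b, Chr g ginv x a m n * Chr g ginv x b a b = _ :=
    RedEin.prod_contract (ginv x)
      (fun a b s => RedEin.C (fun a b c => pd a (fun y => g y b c) x) m n s)
      (fun a b t => RedEin.C (fun a b c => pd a (fun y => g y b c) x) a b t)
  have hR4 : ∑ a, ∑ b, Chr g ginv x a m b * Chr g ginv x b n a = _ :=
    RedEin.prod_contract (ginv x)
      (fun a b s => RedEin.C (fun a b c => pd a (fun y => g y b c) x) m b s)
      (fun a b t => RedEin.C (fun a b c => pd a (fun y => g y b c) x) n a t)
  rw [hR3, hR4] at hR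
  simp only [hchr, ← Finset.mul_sum, Finset.sum_add_distrib, hdh] at hR
  rw [RedEin.dh_contract (ginv x) (fun a p q => pd a (fun y => g y p q) x)
      (fun a s => RedEin.C (fun a b c => pd a (fun y => g y b c) x) m n s),
    RedEin.dh_contract (ginv x) (fun a p q => pd n (fun y => g y p q) x)
      (fun a s => RedEin.C (fun a b c => pd a (fun y => g y b c) x) a m s)] at hR
  -- gauge terms
  have hW : ∀ μ, RedEin.L (ginv x) (fun a b => pd a (fun y => g y b μ) x
      - (1 / 2) * pd μ (fun y => g y a b) x) = - ∑ l, g x μ l * Gc x l := by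
    intro μ
    rw [← hwave x hx μ]
    unfold RedEin.L
    simp only [Finset.mul_sum, ← Finset.sum_sub_distrib]
    refine Finset.sum_congr rfl fun a _ => Finset.sum_congr rfl fun b _ => ?_
    ring
  have hdW : ∀ c μ, - pd c (fun y => ∑ l, g y μ l * Gc y l) x
      = - RedEin.S (ginv x) (fun a p q s => pd c (fun y => g y p q) x *
          (pd a (fun y => g y s μ) x - (1 / 2) * pd μ (fun y => g y a s) x))
        + RedEin.L (ginv x) (fun a s => pd c (fun y => pd a (fun z => g z s μ) y) x
          - (1 / 2) * pd c (fun y => pd μ (fun z => g z a s) y) x) := by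
    intro c μ
    have hC : ∀ a b, DifferentiableAt ℝ (fun y => pd a (fun z => g z b μ) y
        - (1 / 2) * pd μ (fun z => g z a b) y) x := fun a b =>
      (hdd _ _ _).fun_sub ((hdd _ _ _).const_mul _)
    have e : pd c (fun y => - ∑ l, g y μ l * Gc y l) x
        = pd c (fun y => ∑ a, ∑ b, ginv y a b * (pd a (fun z => g z b μ) y
        - (1 / 2) * pd μ (fun z => g z a b) y)) x := by
      refine RedEin.pd_congr_on hΩ hx fun y hy => ?_
      rw [← hwave y hy μ]
      simp only [Finset.mul_sum, ← Finset.sum_sub_distrib]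
      refine Finset.sum_congr rfl fun a _ => Finset.sum_congr rfl fun b _ => ?_
      ring
    rw [← RedEin.pd_neg, e, RedEin.pd_sum (fun a => DifferentiableAt.fun_sum fun b _ =>
      (hhd a b).fun_mul (hC a b))]
    rw [← RedEin.dh_contract (ginv x) (fun a p q => pd c (fun y => g y p q) x)
      (fun a s => pd a (fun y => g y s μ) x - (1 / 2) * pd μ (fun y => g y a s) x)]
    unfold RedEin.L
    rw [← Finset.sum_add_distrib]
    refine Finset.sum_congr rfl fun a _ => ?_
    rw [RedEin.pd_sum (fun b => (hhd a b).fun_mul (hC a b)), ← Finset.sum_add_distrib]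
    refine Finset.sum_congr rfl fun b _ => ?_
    rw [RedEin.pd_mul (hhd a b) (hC a b), RedEin.pd_sub (hdd _ _ _) ((hdd _ _ _).const_mul _),
      RedEin.pd_cmul (hdd _ _ _), ← hdh]
  have hGc : ∀ a, - Gc x a = ∑ s, ginv x a s * RedEin.L (ginv x)
      (fun p q => pd p (fun y => g y q s) x - (1 / 2) * pd s (fun y => g y p q) x) := by
    intro a
    simp only [hW, mul_neg, Finset.sum_neg_distrib, neg_inj, Finset.mul_sum]
    rw [Finset.sum_comm]
    simp only [← mul_assoc, ← Finset.sum_mul, hginv x hx]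
    simp
  have hg1 : - ∑ a, Gc x a * pd a (fun y => g y m n) x
      = RedEin.S (ginv x) (fun a s p q => pd a (fun y => g y m n) x *
        (pd p (fun y => g y q s) x - (1 / 2) * pd s (fun y => g y p q) x)) := by
    rw [← Finset.sum_neg_distrib]
    simp only [← neg_mul, hGc]
    unfold RedEin.L RedEin.S
    simp only [Finset.sum_mul, Finset.mul_sum]
    refine Finset.sum_congr rfl fun a _ => Finset.sum_congr rfl fun s _ =>
      Finset.sum_congr rfl fun p _ => Finset.sum_congr rfl fun q _ => ?_
    ring
  have hg2 : ∑ a, ∑ b, g x a n * g x b m * Gc x a * Gc x b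
      = RedEin.S (ginv x) (fun a A b B =>
        (pd a (fun y => g y A m) x - (1 / 2) * pd m (fun y => g y a A) x) *
        (pd b (fun y => g y B n) x - (1 / 2) * pd n (fun y => g y b B) x)) := by
    rw [← RedEin.LL (ginv x)
      (fun a A => pd a (fun y => g y A m) x - (1 / 2) * pd m (fun y => g y a A) x)
      (fun b B => pd b (fun y => g y B n) x - (1 / 2) * pd n (fun y => g y b B) x), hW, hW,
      neg_mul_neg, mul_comm, Finset.sum_mul_sum]
    refine Finset.sum_congr rfl fun a _ => Finset.sum_congr rfl fun b _ => ?_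
    rw [hgsymm x hx a n, hgsymm x hx b m]
    ring
  have hP : Pterm g ginv x m n
      = (1 / 4) * RedEin.S (ginv x) (fun a A b B =>
          pd m (fun y => g y a A) x * pd n (fun y => g y b B) x)
        - (1 / 2) * RedEin.S (ginv x) (fun a A b B =>
          pd m (fun y => g y a b) x * pd n (fun y => g y A B) x) := by
    unfold Pterm RedEin.S
    congr 2 <;>
    · refine Finset.sum_congr rfl fun a _ => Finset.sum_congr rfl fun s _ =>
        Finset.sum_congr rfl fun p _ => Finset.sum_congr rfl fun q _ => ?_
      ring
  have hQ1 : ∑ a : Fin 4, ∑ a' : Fin 4, ∑ b : Fin 4, ∑ b' : Fin 4,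
      pd a (fun y => g y b m) x * ginv x a a' * ginv x b b' * pd a' (fun y => g y b' n) x
      = RedEin.S (ginv x) (fun a A b B =>
          pd a (fun y => g y b m) x * pd A (fun y => g y B n) x) := by
    unfold RedEin.S
    refine Finset.sum_congr rfl fun a _ => Finset.sum_congr rfl fun s _ =>
        Finset.sum_congr rfl fun p _ => Finset.sum_congr rfl fun q _ => ?_
    ring
  unfold Qterm Gterm Tterm redBox
  rw [hP, hQ1, hg2]
  have e1 := hdW m n
  have e2 := hdW n m
  unfold RedEin.L RedEin.S at *
  linarith
end

section
/- There is a universal constant C such that for every C¹ scalar function ξ on ℝ^{1+3} and every point (t,x) with t ≥ 0 and x ≠ 0, writing q = |x| − t, one has (1 + t + |q|)|∂̄ξ|(t,x) + (1 + |q|)|∂ξ|(t,x) ≤ C Σ_Γ |Γξ|(t,x), where the sum ranges over the 11 Minkowskian commuting vector fields Γ. -/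
open MeasureTheory

lemma mulbd {w y M K : ℝ} (h1 : w * y ≤ K) (h2 : -K ≤ w * y) (h : K ≤ M) : |w * y| ≤ M :=
  abs_le.2 ⟨by linarith, by linarith⟩

lemma unit_bd {a y : ℝ} (h : |a| ≤ 1) : |a * y| ≤ |y| := by
  rw [abs_mul]; nlinarith [abs_nonneg y]

lemma wt_bd {w z y M : ℝ} (hw : |w| ≤ z) (h : |z * y| ≤ M) : |w * y| ≤ M := by
  refine le_trans ?_ h
  rw [abs_mul, abs_mul]
  exact mul_le_mul_of_nonneg_right (hw.trans (le_abs_self z)) (abs_nonneg y)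

lemma ang_core {t r a b u v w M : ℝ} (ha : |a| ≤ 1) (hb : |b| ≤ 1)
    (h : |r * a * v - r * b * u| + |t * u + r * a * w| + |t * v + r * b * w| ≤ M) :
    |(t + r) * (a * v - b * u)| ≤ M := by
  have e : (t + r) * (a * v - b * u) = (r * a * v - r * b * u)
      + a * (t * v + r * b * w) - b * (t * u + r * a * w) := by ring
  rw [e]
  have h1 := abs_sub ((r * a * v - r * b * u) + a * (t * v + r * b * w)) (b * (t * u + r * a * w))
  have h2 := abs_add_le (r * a * v - r * b * u) (a * (t * v + r * b * w))
  have h3 := unit_bd (y := t * v + r * b * w) ha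
  have h4 := unit_bd (y := t * u + r * a * w) hb
  linarith

lemma good_wt {t r y M N : ℝ} (ht : 0 ≤ t) (hr : 0 < r) (h : |(t + r) * y| ≤ M) (h' : |y| ≤ N) :
    (1 + t + |r - t|) * |y| ≤ 2 * M + N := by
  have hq : |r - t| ≤ t + r := abs_le.2 ⟨by linarith, by linarith⟩
  rw [abs_mul, abs_of_pos (by linarith : 0 < t + r)] at h
  nlinarith [abs_nonneg y]

lemma sqrt4 (a b c d : ℝ) : Real.sqrt (a ^ 2 + b ^ 2 + c ^ 2 + d ^ 2) ≤ |a| + |b| + |c| + |d| := by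
  have := abs_nonneg a
  have := abs_nonneg b
  have := abs_nonneg c
  have := abs_nonneg d
  apply Real.sqrt_le_iff.2 ⟨by positivity, ?_⟩
  rw [← sq_abs a, ← sq_abs b, ← sq_abs c, ← sq_abs d]
  have h : 0 ≤ |a| * |b| + |a| * |c| + |a| * |d| + |b| * |c| + |b| * |d| + |c| * |d| := by positivity
  nlinarith

lemma abs_le_one_of {a b c : ℝ} (h : a ^ 2 + b ^ 2 + c ^ 2 = 1) : |a| ≤ 1 := by
  apply abs_le_one_iff_mul_self_le_one.2; nlinarith [sq_nonneg b, sq_nonneg c]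

lemma core {t r a b c u0 u1 u2 u3 : ℝ} (ht : 0 ≤ t) (hr : 0 < r)
    (h : a ^ 2 + b ^ 2 + c ^ 2 = 1) (M : ℝ)
    (hM : |u0| + |u1| + |u2| + |u3| + |r * a * u2 - r * b * u1| + |r * a * u3 - r * c * u1|
      + |r * b * u3 - r * c * u2| + |t * u1 + r * a * u0| + |t * u2 + r * b * u0|
      + |t * u3 + r * c * u0| + |t * u0 + r * a * u1 + r * b * u2 + r * c * u3| ≤ M) :
    (1 + t + |r - t|) * Real.sqrt ((1 / 2 * (u0 + (a * u1 + b * u2 + c * u3))) ^ 2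
      + (a * u2 - b * u1) ^ 2 + (a * u3 - c * u1) ^ 2 + (b * u3 - c * u2) ^ 2)
    + (1 + |r - t|) * Real.sqrt (u0 ^ 2 + u1 ^ 2 + u2 ^ 2 + u3 ^ 2) ≤ 100 * M := by
  have ha : |a| ≤ 1 := abs_le_one_of h
  have hb : |b| ≤ 1 := abs_le_one_of (a := b) (b := a) (c := c) (by linarith)
  have hc : |c| ≤ 1 := abs_le_one_of (a := c) (b := a) (c := b) (by linarith)
  have n0 := abs_nonneg u0
  have n1 := abs_nonneg u1
  have n2 := abs_nonneg u2
  have n3 := abs_nonneg u3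
  have n4 := abs_nonneg (r * a * u2 - r * b * u1)
  have n5 := abs_nonneg (r * a * u3 - r * c * u1)
  have n6 := abs_nonneg (r * b * u3 - r * c * u2)
  have n7 := abs_nonneg (t * u1 + r * a * u0)
  have n8 := abs_nonneg (t * u2 + r * b * u0)
  have n9 := abs_nonneg (t * u3 + r * c * u0)
  have n10 := abs_nonneg (t * u0 + r * a * u1 + r * b * u2 + r * c * u3)
  have hM0 : 0 ≤ M := by linarith
  have A12 : |(t + r) * (a * u2 - b * u1)| ≤ M := ang_core (w := u0) ha hb (by linarith)
  have A13 : |(t + r) * (a * u3 - c * u1)| ≤ M := ang_core (w := u0) ha hc (by linarith)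
  have A23 : |(t + r) * (b * u3 - c * u2)| ≤ M := ang_core (w := u0) hb hc (by linarith)
  have q1 := unit_bd (y := t * u1 + r * a * u0) ha
  have q2 := unit_bd (y := t * u2 + r * b * u0) hb
  have q3 := unit_bd (y := t * u3 + r * c * u0) hc
  set B := a * (t * u1 + r * a * u0) + b * (t * u2 + r * b * u0) + c * (t * u3 + r * c * u0) with hB
  have hBe : B = t * (a * u1 + b * u2 + c * u3) + r * u0 := by
    rw [hB]; linear_combination (r * u0) * h
  have hBb : |B| ≤ |t * u1 + r * a * u0| + |t * u2 + r * b * u0| + |t * u3 + r * c * u0| :=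
    (abs_add_three _ _ _).trans (by linarith)
  set S := t * u0 + r * a * u1 + r * b * u2 + r * c * u3 with hS
  have hSB : |S| + |B| ≤ M := by linarith
  set v := a * u1 + b * u2 + c * u3 with hv
  have D : |(t + r) * (1 / 2 * (u0 + v))| ≤ M := by
    have e : (t + r) * (1 / 2 * (u0 + v)) = 1 / 2 * (S + B) := by rw [hBe, hS, hv]; ring
    rw [e, abs_mul]
    have := abs_add_le S B
    norm_num; linarith [abs_nonneg S, abs_nonneg B]
  have hqq : |(|r - t|)| ≤ t + r := by rw [abs_abs]; exact abs_le.2 ⟨by linarith, by linarith⟩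
  have E : |(|r - t|) * (1 / 2 * (u0 - v))| ≤ M := by
    have e : (r - t) * (1 / 2 * (u0 - v)) = 1 / 2 * (B - S) := by rw [hBe, hS, hv]; ring
    rw [abs_mul, abs_abs, ← abs_mul, e, abs_mul]
    have := abs_sub B S
    norm_num; linarith [abs_nonneg S, abs_nonneg B]
  have D' := wt_bd hqq D
  have C12 := wt_bd hqq A12
  have C13 := wt_bd hqq A13
  have C23 := wt_bd hqq A23
  set q := |r - t| with hq
  have hq0 : 0 ≤ q := abs_nonneg _
  have U0 : |q * u0| ≤ 2 * M := by
    have e : q * u0 = q * (1 / 2 * (u0 + v)) + q * (1 / 2 * (u0 - v)) := by ring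
    rw [e]; exact (abs_add_le _ _).trans (by linarith)
  have V : |q * v| ≤ 2 * M := by
    have e : q * v = q * (1 / 2 * (u0 + v)) - q * (1 / 2 * (u0 - v)) := by ring
    rw [e]; exact (abs_sub _ _).trans (by linarith)
  have tri : ∀ x y z : ℝ, |x + y - z| ≤ |x| + |y| + |z| := fun x y z =>
    (abs_sub _ _).trans (by linarith [abs_add_le x y])
  have U1 : |q * u1| ≤ 4 * M := by
    have e : q * u1 = a * (q * v) - b * (q * (a * u2 - b * u1)) - c * (q * (a * u3 - c * u1)) := by
      rw [hv]; linear_combination (-q * u1) * h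
    have k1 := unit_bd (y := q * v) ha
    have k2 := unit_bd (y := q * (a * u2 - b * u1)) hb
    have k3 := unit_bd (y := q * (a * u3 - c * u1)) hc
    rw [e, abs_le]; rw [abs_le] at k1 k2 k3; constructor <;> linarith
  have U2 : |q * u2| ≤ 4 * M := by
    have e : q * u2 = b * (q * v) + a * (q * (a * u2 - b * u1)) - c * (q * (b * u3 - c * u2)) := by
      rw [hv]; linear_combination (-q * u2) * h
    have k1 := unit_bd (y := q * v) hb
    have k2 := unit_bd (y := q * (a * u2 - b * u1)) ha
    have k3 := unit_bd (y := q * (b * u3 - c * u2)) hc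
    rw [e, abs_le]; rw [abs_le] at k1 k2 k3; constructor <;> linarith
  have U3 : |q * u3| ≤ 4 * M := by
    have e : q * u3 = c * (q * v) + a * (q * (a * u3 - c * u1)) + b * (q * (b * u3 - c * u2)) := by
      rw [hv]; linear_combination (-q * u3) * h
    have k1 := unit_bd (y := q * v) hc
    have k2 := unit_bd (y := q * (a * u3 - c * u1)) ha
    have k3 := unit_bd (y := q * (b * u3 - c * u2)) hb
    rw [e, abs_le]; rw [abs_le] at k1 k2 k3; constructor <;> linarith
  have a1 := unit_bd (y := u1) ha
  have a2 := unit_bd (y := u2) ha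
  have a3 := unit_bd (y := u3) ha
  have b1 := unit_bd (y := u1) hb
  have b2 := unit_bd (y := u2) hb
  have b3 := unit_bd (y := u3) hb
  have c1 := unit_bd (y := u1) hc
  have c2 := unit_bd (y := u2) hc
  have c3 := unit_bd (y := u3) hc
  have P12 := good_wt (N := M) ht hr A12 ((abs_sub _ _).trans (by linarith))
  have P13 := good_wt (N := M) ht hr A13 ((abs_sub _ _).trans (by linarith))
  have P23 := good_wt (N := M) ht hr A23 ((abs_sub _ _).trans (by linarith))
  have PD := good_wt (N := M) ht hr D (by
    have k1 := abs_add_le u0 v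
    have k2 := abs_add_three (a * u1) (b * u2) (c * u3)
    rw [abs_mul]; norm_num
    rw [← hv] at k2
    linarith [abs_nonneg (u0 + v)])
  rw [← hq] at P12 P13 P23 PD
  have G := mul_le_mul_of_nonneg_left
    (sqrt4 (1 / 2 * (u0 + v)) (a * u2 - b * u1) (a * u3 - c * u1) (b * u3 - c * u2))
    (by positivity : 0 ≤ 1 + t + q)
  have F := mul_le_mul_of_nonneg_left (sqrt4 u0 u1 u2 u3) (by positivity : 0 ≤ 1 + q)
  rw [abs_mul, abs_of_nonneg hq0] at U0 U1 U2 U3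
  linarith

/-- There is a universal constant `C` such that for every `C¹` scalar
function `ξ` on `ℝ^{1+3}` and every point `(t,x)` with `t ≥ 0`, `x ≠ 0`, writing
`q = |x| − t`, one has
`(1 + t + |q|)|∂̄ξ| + (1 + |q|)|∂ξ| ≤ C Σ_Γ |Γξ|`, the sum running over the 11
Minkowskian commuting vector fields. -/
theorem stmt2 :
    ∃ C > (0 : ℝ), ∀ ξ : (Fin 4 → ℝ) → ℝ, ContDiff ℝ 1 ξ →
      ∀ p : Fin 4 → ℝ, 0 ≤ p 0 → 0 < rad p →
        (1 + p 0 + |rad p - p 0|) * goodNorm ξ p + (1 + |rad p - p 0|) * derivNorm ξ p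
          ≤ C * ∑ k : Fin 11, |fderiv ℝ ξ p (minkVF k p)| := by
  refine ⟨100, by norm_num, fun ξ _ p ht hr => ?_⟩
  have hr2 : rad p ^ 2 = p 1 ^ 2 + p 2 ^ 2 + p 3 ^ 2 := by
    rw [rad, Real.sq_sqrt (by positivity)]
    simp [Fin.sum_univ_three]
  have hne := hr.ne'
  have hunit : (p 1 / rad p) ^ 2 + (p 2 / rad p) ^ 2 + (p 3 / rad p) ^ 2 = 1 := by
    field_simp; linarith
  have e1 : rad p * (p 1 / rad p) = p 1 := by field_simp
  have e2 : rad p * (p 2 / rad p) = p 2 := by field_simp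
  have e3 : rad p * (p 3 / rad p) = p 3 := by field_simp
  have hp : fderiv ℝ ξ p p = p 0 * pd 0 ξ p + p 1 * pd 1 ξ p + p 2 * pd 2 ξ p + p 3 * pd 3 ξ p := by
    have : p = p 0 • (Pi.single 0 1 : Fin 4 → ℝ) + p 1 • (Pi.single 1 1 : Fin 4 → ℝ)
        + p 2 • (Pi.single 2 1 : Fin 4 → ℝ) + p 3 • (Pi.single 3 1 : Fin 4 → ℝ) := by
      ext i; fin_cases i <;> simp
    conv_lhs => rw [show fderiv ℝ ξ p p = fderiv ℝ ξ p (p 0 • (Pi.single 0 1 : Fin 4 → ℝ) + p 1 • (Pi.single 1 1 : Fin 4 → ℝ)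
        + p 2 • (Pi.single 2 1 : Fin 4 → ℝ) + p 3 • (Pi.single 3 1 : Fin 4 → ℝ)) from congrArg _ this]
    simp only [map_add, map_smul, smul_eq_mul, pd]
  have hsum : ∑ k : Fin 11, |fderiv ℝ ξ p (minkVF k p)| =
      |pd 0 ξ p| + |pd 1 ξ p| + |pd 2 ξ p| + |pd 3 ξ p| + |p 1 * pd 2 ξ p - p 2 * pd 1 ξ p|
      + |p 1 * pd 3 ξ p - p 3 * pd 1 ξ p| + |p 2 * pd 3 ξ p - p 3 * pd 2 ξ p|
      + |p 0 * pd 1 ξ p + p 1 * pd 0 ξ p| + |p 0 * pd 2 ξ p + p 2 * pd 0 ξ p|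
      + |p 0 * pd 3 ξ p + p 3 * pd 0 ξ p|
      + |p 0 * pd 0 ξ p + p 1 * pd 1 ξ p + p 2 * pd 2 ξ p + p 3 * pd 3 ξ p| := by
    rw [← hp]
    have hl : ∀ (c d : ℝ) (x y : Fin 4 → ℝ), fderiv ℝ ξ p (c • x + d • y)
      = c * fderiv ℝ ξ p x + d * fderiv ℝ ξ p y := by intros; simp
    have hl' : ∀ (c d : ℝ) (x y : Fin 4 → ℝ), fderiv ℝ ξ p (c • x - d • y)
      = c * fderiv ℝ ξ p x - d * fderiv ℝ ξ p y := by intros; simp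
    simp only [pd, ← hl, ← hl']
    simp only [Fin.sum_univ_succ, Fin.sum_univ_zero]
    simp only [← add_assoc, add_zero]
    rfl
  have hg : goodNorm ξ p = Real.sqrt ((1 / 2 * (pd 0 ξ p + (p 1 / rad p * pd 1 ξ p + p 2 / rad p * pd 2 ξ p + p 3 / rad p * pd 3 ξ p))) ^ 2
      + (p 1 / rad p * pd 2 ξ p - p 2 / rad p * pd 1 ξ p) ^ 2 + (p 1 / rad p * pd 3 ξ p - p 3 / rad p * pd 1 ξ p) ^ 2 + (p 2 / rad p * pd 3 ξ p - p 3 / rad p * pd 2 ξ p) ^ 2) := by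
    have f0 : (0 : Fin 3).succ = (1 : Fin 4) := rfl
    have f1 : (1 : Fin 3).succ = (2 : Fin 4) := rfl
    have f2 : (2 : Fin 3).succ = (3 : Fin 4) := rfl
    rw [goodNorm, goodNormSq, dS, angSq]
    congr 1
    simp only [Fin.sum_univ_three, f0, f1, f2]
    ring
  have hd : derivNorm ξ p = Real.sqrt (pd 0 ξ p ^ 2 + pd 1 ξ p ^ 2 + pd 2 ξ p ^ 2 + pd 3 ξ p ^ 2) := by
    rw [derivNorm, derivNormSq, Fin.sum_univ_four]
  rw [hg, hd]
  refine core ht hr hunit _ ?_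
  rw [e1, e2, e3, hsum]
end

section
/- (Weighted Klainerman–Sobolev inequality.) For each γ ∈ (0,1/8] there exists a constant C such that for every ξ ∈ C_c^∞(ℝ^{1+3}), every t ≥ 0 and every x ∈ ℝ³, |ξ(t,x)| (1 + t + |x|) (1 + ||x| − t|)^{1/2} w(|x| − t)^{1/2} ≤ C Σ_{|I| ≤ 3} ‖w(|·| − t)^{1/2} (Γ^I ξ)(t,·)‖_{L²(ℝ³)}, where the sum ranges over all compositions Γ^I of at most three Minkowskian commuting vector fields (including the empty composition). -/
open MeasureTheory

lemma ks_vf_smooth (k : Fin 11) : ContDiff ℝ (⊤ : ℕ∞) (minkVF k) := by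
  fin_cases k <;> simp [minkVF] <;> fun_prop

lemma ks_gamma_smooth {ξ : (Fin 4 → ℝ) → ℝ} (h : ContDiff ℝ (⊤ : ℕ∞) ξ) (I : List (Fin 11)) :
    ContDiff ℝ (⊤ : ℕ∞) (GammaList I ξ) := by
  induction I with
  | nil => exact h
  | cons k I ih =>
    show ContDiff ℝ (⊤ : ℕ∞) (fun p => fderiv ℝ (GammaList I ξ) p (minkVF k p))
    exact (ih.fderiv_right (m := (⊤ : ℕ∞)) (by simp)).clm_apply (ks_vf_smooth k)

lemma ks_gamma_supp {ξ : (Fin 4 → ℝ) → ℝ} (h : HasCompactSupport ξ) (I : List (Fin 11)) :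
    HasCompactSupport (GammaList I ξ) := by
  induction I with
  | nil => exact h
  | cons k I ih =>
    have := ih.fderiv (𝕜 := ℝ)
    refine this.mono ?_
    intro p hp
    simp only [Function.mem_support, GammaList] at hp ⊢
    intro h0
    apply hp
    rw [h0]; rfl

lemma ks_spt_cont (t : ℝ) : Continuous (spt t) := by
  unfold spt
  refine continuous_pi fun i => ?_
  fin_cases i <;> simp <;> fun_prop

lemma ks_spt_emb (t : ℝ) : Topology.IsClosedEmbedding (spt t) := by
  have hl : Function.LeftInverse (fun (p : Fin 4 → ℝ) (i : Fin 3) => p i.succ) (spt t) := by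
    intro y
    funext i
    fin_cases i <;> simp [spt]
  exact hl.isClosedEmbedding (by fun_prop) (ks_spt_cont t)

lemma ks_rad3_cont : Continuous rad3 := by unfold rad3; fun_prop

lemma ks_wgt_cont (γ : ℝ) : Continuous (wgt γ) := by
  unfold wgt
  have h : ∀ (e : ℝ), Continuous (fun q : ℝ => 1 + (1 + |q|) ^ e) := by
    intro e
    refine continuous_const.add (Continuous.rpow_const (by fun_prop) ?_)
    intro q; left; positivity
  refine Continuous.if_le (h _) (h _) continuous_const continuous_id ?_
  intro q hq
  rw [← hq]
  simp

lemma ks_wgt_ge (γ q : ℝ) : 1 ≤ wgt γ q := by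
  unfold wgt
  split_ifs
  · have : 0 ≤ (1 + |q|) ^ (1 + 2 * γ) := by positivity
    linarith
  · have : 0 ≤ (1 + |q|) ^ (-(γ / 2)) := by positivity
    linarith

lemma ks_wgt_comp {γ : ℝ} (hγ0 : 0 < γ) (hγ1 : γ ≤ 1 / 8) {q q' : ℝ}
    (h : |q' - q| ≤ (1 + |q|) / 2) : wgt γ q ≤ 8 * wgt γ q' := by
  have h1 := ks_wgt_ge γ q'
  have hpow : ∀ y : ℝ, 1 ≤ y → y ≤ 2 → y ^ (1 + 2 * γ) ≤ 4 := by
    intro y hy hy2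
    calc y ^ (1 + 2 * γ) ≤ y ^ (2 : ℝ) := Real.rpow_le_rpow_of_exponent_le hy (by linarith)
      _ = y ^ 2 := by norm_num
      _ ≤ 4 := by nlinarith
  by_cases hq : 0 ≤ q
  · have e1 : wgt γ q = 1 + (1 + q) ^ (1 + 2 * γ) := by
      unfold wgt; rw [if_pos hq, abs_of_nonneg hq]
    rw [abs_of_nonneg hq] at h
    rw [abs_le] at h
    by_cases hq' : 0 ≤ q'
    · have e2 : wgt γ q' = 1 + (1 + q') ^ (1 + 2 * γ) := by
        unfold wgt; rw [if_pos hq', abs_of_nonneg hq']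
      rw [e1, e2]
      have : (1 + q) ^ (1 + 2 * γ) ≤ 4 * (1 + q') ^ (1 + 2 * γ) := by
        calc (1 + q) ^ (1 + 2 * γ) ≤ (2 * (1 + q')) ^ (1 + 2 * γ) :=
              Real.rpow_le_rpow (by linarith) (by linarith) (by linarith)
          _ = 2 ^ (1 + 2 * γ) * (1 + q') ^ (1 + 2 * γ) :=
              Real.mul_rpow (by norm_num) (by linarith)
          _ ≤ _ := by
              have := hpow 2 (by norm_num) le_rfl
              have h0 : 0 ≤ (1 + q') ^ (1 + 2 * γ) := by positivity
              nlinarith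
      have h0 : 0 ≤ (1 + q') ^ (1 + 2 * γ) := by positivity
      linarith
    · rw [e1]
      have := hpow (1 + q) (by linarith) (by linarith)
      linarith
  · have : wgt γ q ≤ 2 := by
      unfold wgt; rw [if_neg hq]
      have : (1 + |q|) ^ (-(γ / 2)) ≤ 1 :=
        Real.rpow_le_one_of_one_le_of_nonpos (by linarith [abs_nonneg q]) (by linarith)
      linarith
    linarith

noncomputable def ksS (ℓ : (Fin 4 → ℝ) →L[ℝ] ℝ) (p : Fin 4 → ℝ) : ℝ :=
  ∑ k : Fin 11, |ℓ (minkVF k p)|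

lemma ks_le_S (ℓ : (Fin 4 → ℝ) →L[ℝ] ℝ) (p : Fin 4 → ℝ) (k : Fin 11) :
    |ℓ (minkVF k p)| ≤ ksS ℓ p :=
  Finset.single_le_sum (f := fun k => |ℓ (minkVF k p)|) (fun _ _ => abs_nonneg _)
    (Finset.mem_univ k)

lemma ks_S_nonneg (ℓ : (Fin 4 → ℝ) →L[ℝ] ℝ) (p : Fin 4 → ℝ) : 0 ≤ ksS ℓ p :=
  Finset.sum_nonneg fun _ _ => abs_nonneg _

lemma ks_comb (ℓ : (Fin 4 → ℝ) →L[ℝ] ℝ) (p V : Fin 4 → ℝ) (c : Fin 11 → ℝ) (M : ℝ)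
    (hc : ∀ k, |c k| ≤ M) (hV : V = ∑ k, c k • minkVF k p) : |ℓ V| ≤ M * ksS ℓ p := by
  rw [hV, map_sum, ksS, Finset.mul_sum]
  refine (Finset.abs_sum_le_sum_abs _ _).trans (Finset.sum_le_sum fun k _ => ?_)
  rw [map_smul, smul_eq_mul, abs_mul]
  exact mul_le_mul_of_nonneg_right (hc k) (abs_nonneg _)

lemma ks_coord_le (y : Fin 3 → ℝ) (i : Fin 3) : |y i| ≤ rad3 y := by
  unfold rad3
  apply Real.abs_le_sqrt
  exact Finset.single_le_sum (f := fun i => y i ^ 2) (fun _ _ => sq_nonneg _) (Finset.mem_univ i)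

lemma ks_rad3_sq (y : Fin 3 → ℝ) : rad3 y ^ 2 = y 0 ^ 2 + y 1 ^ 2 + y 2 ^ 2 := by
  unfold rad3
  rw [Real.sq_sqrt (Finset.sum_nonneg fun _ _ => sq_nonneg _), Fin.sum_univ_three]

lemma ks_rad3_nonneg (y : Fin 3 → ℝ) : 0 ≤ rad3 y := Real.sqrt_nonneg _

lemma ks_pd {t : ℝ} (ht : 0 ≤ t) (y : Fin 3 → ℝ) (ℓ : (Fin 4 → ℝ) →L[ℝ] ℝ) (i : Fin 3) :
    (1 + |rad3 y - t|) * |ℓ (Pi.single i.succ 1)| ≤ 2 * ksS ℓ (spt t y) := by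
  have h1 : |ℓ (Pi.single i.succ 1)| ≤ ksS ℓ (spt t y) := by
    fin_cases i
    · exact ks_le_S ℓ (spt t y) 1
    · exact ks_le_S ℓ (spt t y) 2
    · exact ks_le_S ℓ (spt t y) 3
  have hr := ks_rad3_nonneg y
  have hsq := ks_rad3_sq y
  have hy0 := (ks_coord_le y 0).trans (le_add_of_nonneg_left ht)
  have hy1 := (ks_coord_le y 1).trans (le_add_of_nonneg_left ht)
  have hy2 := (ks_coord_le y 2).trans (le_add_of_nonneg_left ht)
  have hT : |t| ≤ t + rad3 y := by rw [abs_of_nonneg ht]; linarith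
  have h00 : 0 ≤ t + rad3 y := by positivity
  have h2 : |ℓ ((t ^ 2 - rad3 y ^ 2) • Pi.single i.succ 1)| ≤ (t + rad3 y) * ksS ℓ (spt t y) := by
    fin_cases i
    · refine ks_comb ℓ _ _ ![0,0,0,0,y 1,y 2,0,t,0,0,-y 0] _ ?_ ?_
      · intro k; fin_cases k <;> simp <;> assumption
      · rw [hsq]
        funext j
        fin_cases j <;> simp [Fin.sum_univ_succ, minkVF, spt] <;> ring
    · refine ks_comb ℓ _ _ ![0,0,0,0,-y 0,0,y 2,0,t,0,-y 1] _ ?_ ?_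
      · intro k; fin_cases k <;> simp <;> assumption
      · rw [hsq]
        funext j
        fin_cases j <;> simp [Fin.sum_univ_succ, minkVF, spt] <;> ring
    · refine ks_comb ℓ _ _ ![0,0,0,0,0,-y 0,-y 1,0,0,t,-y 2] _ ?_ ?_
      · intro k; fin_cases k <;> simp <;> assumption
      · rw [hsq]
        funext j
        fin_cases j <;> simp [Fin.sum_univ_succ, minkVF, spt] <;> ring
  rw [map_smul, smul_eq_mul, abs_mul] at h2
  have h3 : |t ^ 2 - rad3 y ^ 2| = (t + rad3 y) * |rad3 y - t| := by
    rw [show t ^ 2 - rad3 y ^ 2 = (t + rad3 y) * (t - rad3 y) by ring, abs_mul,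
      abs_of_nonneg h00, abs_sub_comm]
  rw [h3, mul_assoc] at h2
  have h4 : |rad3 y - t| * |ℓ (Pi.single i.succ 1)| ≤ ksS ℓ (spt t y) := by
    rcases h00.eq_or_lt with h | h
    · have : rad3 y - t = 0 := by linarith
      rw [this]; simp; exact ks_S_nonneg _ _
    · exact le_of_mul_le_mul_left h2 h
  linarith

noncomputable def ksE (m : ℕ) (ξ : (Fin 4 → ℝ) → ℝ) (p : Fin 4 → ℝ) : ℝ :=
  ∑ n ∈ Finset.range (m + 1), ∑ I : Fin n → Fin 11, (GammaList (List.ofFn I) ξ p) ^ 2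

lemma ksE_nonneg (m : ℕ) (ξ : (Fin 4 → ℝ) → ℝ) (p : Fin 4 → ℝ) : 0 ≤ ksE m ξ p :=
  Finset.sum_nonneg fun _ _ => Finset.sum_nonneg fun _ _ => sq_nonneg _

lemma ksE_cont (m : ℕ) {ξ : (Fin 4 → ℝ) → ℝ} (h : ContDiff ℝ (⊤ : ℕ∞) ξ) :
    Continuous (ksE m ξ) := by
  unfold ksE
  have := fun I => (ks_gamma_smooth h I).continuous
  fun_prop

lemma ksE_mono (m : ℕ) (ξ : (Fin 4 → ℝ) → ℝ) (p : Fin 4 → ℝ) : ksE m ξ p ≤ ksE (m + 1) ξ p := by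
  unfold ksE
  rw [Finset.sum_range_succ _ (m + 1)]
  exact le_add_of_nonneg_right (Finset.sum_nonneg fun _ _ => sq_nonneg _)

lemma ksE_step (m : ℕ) (ξ : (Fin 4 → ℝ) → ℝ) (p : Fin 4 → ℝ) :
    ∑ n ∈ Finset.range (m + 1), ∑ I : Fin n → Fin 11, ∑ k : Fin 11,
      (GammaList (k :: List.ofFn I) ξ p) ^ 2 ≤ ksE (m + 1) ξ p := by
  unfold ksE
  rw [Finset.sum_range_succ' _ (m + 1)]
  refine le_add_of_le_of_nonneg (Finset.sum_le_sum fun n _ => ?_)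
    (Finset.sum_nonneg fun _ _ => sq_nonneg _)
  rw [Finset.sum_comm, ← Fintype.sum_prod_type']
  refine le_of_eq (Fintype.sum_equiv (Fin.consEquiv (fun _ => Fin 11)) _ _ ?_)
  rintro ⟨k, I⟩
  simp [Fin.consEquiv]

lemma ks_avg {f f' g : ℝ → ℝ} {α β a : ℝ} (hαβ : α < β) (ha : a ∈ Set.Icc α β)
    (hf : ∀ u ∈ Set.Icc α β, HasDerivAt f (f' u) u) (hg : Continuous g) (hg0 : ∀ u, 0 ≤ g u)
    (hfg : ∀ u ∈ Set.Icc α β, f u ≤ g u)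
    (hb : ∀ u ∈ Set.Icc α β, (β - α) * |f' u| ≤ 96 * g u) :
    (β - α) * f a ≤ 97 * ∫ u in α..β, g u := by
  have hL : 0 < β - α := by linarith
  set φ : ℝ → ℝ := fun u => 96 / (β - α) * g u with hφ
  have hφc : Continuous φ := by fun_prop
  have hφ0 : ∀ u, 0 ≤ φ u := fun u => by have := hg0 u; positivity
  have hb' : ∀ u ∈ Set.Icc α β, |f' u| ≤ φ u := by
    intro u hu
    have := hb u hu
    rw [hφ]
    simp only
    rw [div_mul_eq_mul_div, le_div_iff₀ hL]
    linarith
  have hmono : ∀ c d : ℝ, α ≤ c → c ≤ d → d ≤ β → ∫ u in c..d, φ u ≤ ∫ u in α..β, φ u := by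
    intro c d h1 h2 h3
    exact intervalIntegral.integral_mono_interval h1 h2 h3 (Filter.Eventually.of_forall hφ0)
      (hφc.intervalIntegrable _ _)
  have key : ∀ u ∈ Set.Icc α β, f a ≤ g u + ∫ u in α..β, φ u := by
    intro u hu
    have h1 := hfg u hu
    rcases le_total u a with h | h
    · have := intervalIntegral.sub_le_integral_of_hasDeriv_right_of_le (g := f) (g' := f') (φ := φ) h
        (fun v hv => (hf v ⟨hu.1.trans hv.1, hv.2.trans ha.2⟩).continuousAt.continuousWithinAt)
        (fun v hv => (hf v ⟨hu.1.trans hv.1.le, hv.2.le.trans ha.2⟩).hasDerivWithinAt)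
        hφc.integrableOn_Icc
        (fun v hv => (le_abs_self _).trans (hb' v ⟨hu.1.trans hv.1.le, hv.2.le.trans ha.2⟩))
      have := hmono u a hu.1 h ha.2
      linarith
    · have := intervalIntegral.sub_le_integral_of_hasDeriv_right_of_le (g := fun v => - f v)
        (g' := fun v => - f' v) (φ := φ) h
        (fun v hv => (hf v ⟨ha.1.trans hv.1, hv.2.trans hu.2⟩).neg.continuousAt.continuousWithinAt)
        (fun v hv => (hf v ⟨ha.1.trans hv.1.le, hv.2.le.trans hu.2⟩).neg.hasDerivWithinAt)
        hφc.integrableOn_Icc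
        (fun v hv => (neg_le_abs _).trans (hb' v ⟨ha.1.trans hv.1.le, hv.2.le.trans hu.2⟩))
      have := hmono a u ha.1 h hu.2
      linarith
  have h2 : ∫ _u in α..β, f a ≤ ∫ u in α..β, (g u + ∫ u in α..β, φ u) := by
    apply intervalIntegral.integral_mono_on hαβ.le (by simp)
      ((hg.add continuous_const).intervalIntegrable _ _) key
  rw [intervalIntegral.integral_const, intervalIntegral.integral_add
    (hg.intervalIntegrable _ _) (by simp), intervalIntegral.integral_const, hφ,
    intervalIntegral.integral_const_mul, smul_eq_mul, smul_eq_mul] at h2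
  have h3 : (β - α) * (96 / (β - α) * ∫ u in α..β, g u) = 96 * ∫ u in α..β, g u := by
    field_simp
  linarith

lemma ksE_deriv (m : ℕ) {ξ : (Fin 4 → ℝ) → ℝ} (h : ContDiff ℝ (⊤ : ℕ∞) ξ) (c : ℝ → Fin 4 → ℝ)
    (V : Fin 4 → ℝ) (u L : ℝ) (hL : 0 ≤ L) (hc : HasDerivAt c V u)
    (hV : ∀ ℓ : (Fin 4 → ℝ) →L[ℝ] ℝ, L * |ℓ V| ≤ 8 * ksS ℓ (c u)) :
    ∃ f', HasDerivAt (fun v => ksE m ξ (c v)) f' u ∧ L * |f'| ≤ 96 * ksE (m + 1) ξ (c u) := by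
  refine ⟨∑ n ∈ Finset.range (m + 1), ∑ I : Fin n → Fin 11,
    2 * GammaList (List.ofFn I) ξ (c u) * fderiv ℝ (GammaList (List.ofFn I) ξ) (c u) V, ?_, ?_⟩
  · unfold ksE
    refine HasDerivAt.fun_sum fun n _ => HasDerivAt.fun_sum fun I _ => ?_
    have hd : HasFDerivAt (GammaList (List.ofFn I) ξ)
        (fderiv ℝ (GammaList (List.ofFn I) ξ) (c u)) (c u) :=
      ((ks_gamma_smooth h _).differentiable (by simp)).differentiableAt.hasFDerivAt
    have := (hd.comp_hasDerivAt u hc).fun_pow 2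
    simpa using this
  · have h1 : L * |∑ n ∈ Finset.range (m + 1), ∑ I : Fin n → Fin 11,
        2 * GammaList (List.ofFn I) ξ (c u) * fderiv ℝ (GammaList (List.ofFn I) ξ) (c u) V| ≤
        ∑ n ∈ Finset.range (m + 1), ∑ I : Fin n → Fin 11, (88 * (GammaList (List.ofFn I) ξ (c u)) ^ 2
          + 8 * ∑ k : Fin 11, (GammaList (k :: List.ofFn I) ξ (c u)) ^ 2) := by
      rw [← abs_of_nonneg hL, ← abs_mul, Finset.mul_sum]
      refine (Finset.abs_sum_le_sum_abs _ _).trans (Finset.sum_le_sum fun n _ => ?_)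
      rw [Finset.mul_sum]
      refine (Finset.abs_sum_le_sum_abs _ _).trans (Finset.sum_le_sum fun I _ => ?_)
      have hv := hV (fderiv ℝ (GammaList (List.ofFn I) ξ) (c u))
      set A := GammaList (List.ofFn I) ξ (c u)
      have e : |L * (2 * A * fderiv ℝ (GammaList (List.ofFn I) ξ) (c u) V)| =
          2 * |A| * (L * |fderiv ℝ (GammaList (List.ofFn I) ξ) (c u) V|) := by
        rw [abs_mul, abs_mul, abs_mul, abs_of_nonneg hL]; norm_num; ring
      rw [e]
      refine (mul_le_mul_of_nonneg_left hv (by positivity)).trans ?_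
      have e2 : 2 * |A| * (8 * ksS (fderiv ℝ (GammaList (List.ofFn I) ξ) (c u)) (c u)) =
          8 * ∑ k : Fin 11, 2 * |A| * |GammaList (k :: List.ofFn I) ξ (c u)| := by
        unfold ksS
        rw [← Finset.mul_sum]
        simp only [GammaList]
        ring
      have e3 : 88 * A ^ 2 + 8 * ∑ k : Fin 11, (GammaList (k :: List.ofFn I) ξ (c u)) ^ 2 =
          8 * ∑ k : Fin 11, (A ^ 2 + (GammaList (k :: List.ofFn I) ξ (c u)) ^ 2) := by
        rw [Finset.sum_add_distrib]; simp; ring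
      rw [e2, e3]
      refine mul_le_mul_of_nonneg_left (Finset.sum_le_sum fun k _ => ?_) (by norm_num)
      have := two_mul_le_add_sq |A| |GammaList (k :: List.ofFn I) ξ (c u)|
      rwa [sq_abs, sq_abs] at this
    refine h1.trans ?_
    simp only [Finset.sum_add_distrib, ← Finset.mul_sum]
    have h2 := ksE_mono m ξ (c u)
    have h3 := ksE_step m ξ (c u)
    have h4 : ∑ n ∈ Finset.range (m + 1), ∑ I : Fin n → Fin 11,
      (GammaList (List.ofFn I) ξ (c u)) ^ 2 = ksE m ξ (c u) := rfl
    rw [h4]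
    linarith

lemma ks_spt_deriv {c : ℝ → Fin 3 → ℝ} {v : Fin 3 → ℝ} {u : ℝ} (t : ℝ) (h : HasDerivAt c v u) :
    HasDerivAt (fun u => spt t (c u)) (spt 0 v) u := by
  rw [hasDerivAt_pi] at h ⊢
  intro i
  fin_cases i
  · simpa [spt] using hasDerivAt_const u t
  · simpa [spt] using h 0
  · simpa [spt] using h 1
  · simpa [spt] using h 2

lemma ks_update_deriv (s : Fin 3 → ℝ) (i : Fin 3) (u : ℝ) :
    HasDerivAt (fun v => Function.update s i v) (Pi.single i 1) u := hasDerivAt_update s i u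

/-- The abstract local Sobolev inequality in a chart. -/
lemma ks_box {ξ : (Fin 4 → ℝ) → ℝ} (h : ContDiff ℝ (⊤ : ℕ∞) ξ) (t : ℝ)
    (Ψ : (Fin 3 → ℝ) → (Fin 3 → ℝ)) (Ψ' : (Fin 3 → ℝ) → (Fin 3 → ℝ) →L[ℝ] (Fin 3 → ℝ))
    (hΨ : ∀ s, HasFDerivAt Ψ (Ψ' s) s)
    (α β a : Fin 3 → ℝ) (hαβ : ∀ i, α i < β i) (ha : ∀ i, a i ∈ Set.Icc (α i) (β i))
    (hctrl : ∀ s, (∀ i, s i ∈ Set.Icc (α i) (β i)) → ∀ i, ∀ ℓ : (Fin 4 → ℝ) →L[ℝ] ℝ,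
      (β i - α i) * |ℓ (spt 0 (Ψ' s (Pi.single i 1)))| ≤ 8 * ksS ℓ (spt t (Ψ s))) :
    ENNReal.ofReal ((β 0 - α 0) * (β 1 - α 1) * (β 2 - α 2) * ksE 0 ξ (spt t (Ψ a))) ≤
      97 ^ 3 * ∫⁻ s in Set.univ.pi (fun i => Set.Ioc (α i) (β i)),
        ENNReal.ofReal (ksE 3 ξ (spt t (Ψ s))) := by
  have hΨc : Continuous Ψ := continuous_iff_continuousAt.2 fun s => (hΨ s).continuousAt
  have hGc : ∀ m, Continuous (fun s => ksE m ξ (spt t (Ψ s))) := fun m =>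
    (ksE_cont m h).comp ((ks_spt_cont t).comp hΨc)
  set G : ℕ → (Fin 3 → ℝ) → ENNReal := fun m s => ENNReal.ofReal (ksE m ξ (spt t (Ψ s))) with hG
  have hGm : ∀ m, Measurable (G m) := fun m => ((hGc m).measurable).ennreal_ofReal
  have step : ∀ (m : ℕ) (i : Fin 3) (s : Fin 3 → ℝ), (∀ i, s i ∈ Set.Icc (α i) (β i)) →
      ENNReal.ofReal (β i - α i) * G m s ≤
        97 * ∫⁻ u in Set.Ioc (α i) (β i), G (m + 1) (Function.update s i u) := by
    intro m i s hs
    have hmem : ∀ u ∈ Set.Icc (α i) (β i), ∀ j,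
        Function.update s i u j ∈ Set.Icc (α j) (β j) := by
      intro u hu j
      by_cases hj : j = i
      · subst hj; simpa using hu
      · simpa [hj] using hs j
    have hex : ∀ u ∈ Set.Icc (α i) (β i), ∃ f',
        HasDerivAt (fun v => ksE m ξ (spt t (Ψ (Function.update s i v)))) f' u ∧
        (β i - α i) * |f'| ≤ 96 * ksE (m + 1) ξ (spt t (Ψ (Function.update s i u))) := by
      intro u hu
      refine ksE_deriv m h (fun v => spt t (Ψ (Function.update s i v)))
        (spt 0 (Ψ' (Function.update s i u) (Pi.single i 1))) u _ (by linarith [hαβ i]) ?_ ?_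
      · exact ks_spt_deriv t ((hΨ _).comp_hasDerivAt u (ks_update_deriv s i u))
      · exact hctrl _ (hmem u hu) i
    choose! f' hf' using hex
    have hgc : Continuous (fun u => ksE (m + 1) ξ (spt t (Ψ (Function.update s i u)))) :=
      (hGc (m + 1)).comp (continuous_const.update i continuous_id)
    have := ks_avg (f := fun v => ksE m ξ (spt t (Ψ (Function.update s i v)))) (f' := f')
      (hαβ i) (hs i) (fun u hu => (hf' u hu).1) hgc (fun u => ksE_nonneg _ _ _)
      (fun u _ => ksE_mono _ _ _) (fun u hu => (hf' u hu).2)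
    simp only [Function.update_eq_self] at this
    rw [intervalIntegral.integral_of_le (hαβ i).le] at this
    have h2 := ENNReal.ofReal_le_ofReal this
    rw [ENNReal.ofReal_mul (by linarith [hαβ i]), ENNReal.ofReal_mul (by norm_num),
      ofReal_integral_eq_lintegral_ofReal
        (hgc.integrableOn_Icc.mono_set Set.Ioc_subset_Icc_self)
        (Filter.Eventually.of_forall fun u => ksE_nonneg _ _ _)] at h2
    simpa [hG] using h2
  set μ : Fin 3 → Measure ℝ := fun i => volume.restrict (Set.Ioc (α i) (β i)) with hμ
  have hpi : (volume : Measure (Fin 3 → ℝ)).restrict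
      (Set.univ.pi (fun i => Set.Ioc (α i) (β i))) = Measure.pi μ := by
    rw [hμ, ← Measure.restrict_pi_pi]; rfl
  have hupd : ∀ (s : Fin 3 → ℝ) (i : Fin 3) (u : ℝ), (∀ i, s i ∈ Set.Icc (α i) (β i)) →
      u ∈ Set.Ioc (α i) (β i) → ∀ j, Function.update s i u j ∈ Set.Icc (α j) (β j) := by
    intro s i u hs hu j
    by_cases hj : j = i
    · subst hj; simpa using ⟨hu.1.le, hu.2⟩
    · simpa [hj] using hs j
  have s2 : ∀ s, (∀ i, s i ∈ Set.Icc (α i) (β i)) →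
      ENNReal.ofReal (β 2 - α 2) * G 2 s ≤ 97 * lmarginal μ {2} (G 3) s := by
    intro s hs
    rw [lmarginal_singleton]
    exact step 2 2 s hs
  have s1 : ∀ s, (∀ i, s i ∈ Set.Icc (α i) (β i)) →
      ENNReal.ofReal (β 2 - α 2) * (ENNReal.ofReal (β 1 - α 1) * G 1 s)
        ≤ 97 * (97 * lmarginal μ {1, 2} (G 3) s) := by
    intro s hs
    rw [lmarginal_insert _ (hGm 3) (by decide)]
    calc _ ≤ ENNReal.ofReal (β 2 - α 2) *
          (97 * ∫⁻ u in Set.Ioc (α 1) (β 1), G 2 (Function.update s 1 u)) := by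
            exact mul_le_mul' le_rfl (step 1 1 s hs)
      _ = 97 * ∫⁻ u in Set.Ioc (α 1) (β 1),
            ENNReal.ofReal (β 2 - α 2) * G 2 (Function.update s 1 u) := by
          rw [lintegral_const_mul' _ _ ENNReal.ofReal_ne_top]; ring
      _ ≤ 97 * ∫⁻ u in Set.Ioc (α 1) (β 1), 97 * lmarginal μ {2} (G 3) (Function.update s 1 u) := by
          gcongr 97 * ?_
          exact setLIntegral_mono' measurableSet_Ioc fun u hu => s2 _ (hupd s 1 u hs hu)
      _ = _ := by rw [lintegral_const_mul' _ _ (by norm_num)]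
  have s0 : ∀ s, (∀ i, s i ∈ Set.Icc (α i) (β i)) →
      ENNReal.ofReal (β 2 - α 2) * (ENNReal.ofReal (β 1 - α 1) *
        (ENNReal.ofReal (β 0 - α 0) * G 0 s))
        ≤ 97 * (97 * (97 * lmarginal μ {0, 1, 2} (G 3) s)) := by
    intro s hs
    rw [lmarginal_insert _ (hGm 3) (by decide)]
    calc _ ≤ ENNReal.ofReal (β 2 - α 2) * (ENNReal.ofReal (β 1 - α 1) *
          (97 * ∫⁻ u in Set.Ioc (α 0) (β 0), G 1 (Function.update s 0 u))) := by
            exact mul_le_mul' le_rfl (mul_le_mul' le_rfl (step 0 0 s hs))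
      _ = 97 * ∫⁻ u in Set.Ioc (α 0) (β 0), ENNReal.ofReal (β 2 - α 2) *
            (ENNReal.ofReal (β 1 - α 1) * G 1 (Function.update s 0 u)) := by
          rw [lintegral_const_mul' _ _ ENNReal.ofReal_ne_top,
            lintegral_const_mul' _ _ ENNReal.ofReal_ne_top]; ring
      _ ≤ 97 * ∫⁻ u in Set.Ioc (α 0) (β 0),
            97 * (97 * lmarginal μ {1, 2} (G 3) (Function.update s 0 u)) := by
          gcongr 97 * ?_
          exact setLIntegral_mono' measurableSet_Ioc fun u hu => s1 _ (hupd s 0 u hs hu)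
      _ = _ := by
          rw [lintegral_const_mul' _ _ (by norm_num), lintegral_const_mul' _ _ (by norm_num)]
  have := s0 a ha
  rw [hpi, lintegral_eq_lmarginal_univ a, show (Finset.univ : Finset (Fin 3)) = {0, 1, 2} by decide]
  have hp : ∀ i, 0 ≤ β i - α i := fun i => by linarith [hαβ i]
  rw [ENNReal.ofReal_mul (mul_nonneg (mul_nonneg (hp _) (hp _)) (hp _)),
    ENNReal.ofReal_mul (mul_nonneg (hp _) (hp _)), ENNReal.ofReal_mul (hp _)]
  refine le_trans (le_of_eq ?_) (this.trans (le_of_eq ?_))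
  · simp only [hG]; ring
  · ring

lemma ks_int {ξ : (Fin 4 → ℝ) → ℝ} (h : ContDiff ℝ (⊤ : ℕ∞) ξ) (hs : HasCompactSupport ξ)
    (γ t : ℝ) (I : List (Fin 11)) :
    Integrable (fun z : Fin 3 → ℝ => wgt γ (rad3 z - t) * (GammaList I ξ (spt t z)) ^ 2) := by
  have hc : Continuous (fun z : Fin 3 → ℝ => wgt γ (rad3 z - t) * (GammaList I ξ (spt t z)) ^ 2) := by
    have h1 := (ks_wgt_cont γ).comp (ks_rad3_cont.sub (continuous_const (y := t)))
    have h2 := (ks_gamma_smooth h I).continuous.comp (ks_spt_cont t)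
    exact h1.mul (h2.pow 2)
  refine hc.integrable_of_hasCompactSupport ?_
  have h3 := (ks_gamma_supp hs I).comp_isClosedEmbedding (ks_spt_emb t)
  refine h3.mono ?_
  intro z hz
  simp only [Function.mem_support, Function.comp] at hz ⊢
  intro h0
  apply hz
  rw [h0]; simp

lemma ks_int_E {ξ : (Fin 4 → ℝ) → ℝ} (h : ContDiff ℝ (⊤ : ℕ∞) ξ) (hs : HasCompactSupport ξ)
    (γ t : ℝ) :
    ∫⁻ z : Fin 3 → ℝ, ENNReal.ofReal (wgt γ (rad3 z - t) * ksE 3 ξ (spt t z)) =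
      ENNReal.ofReal (∑ n ∈ Finset.range 4, ∑ I : Fin n → Fin 11, ∫ z : Fin 3 → ℝ,
        wgt γ (rad3 z - t) * (GammaList (List.ofFn I) ξ (spt t z)) ^ 2) := by
  have hi := fun (n : ℕ) (I : Fin n → Fin 11) => ks_int h hs γ t (List.ofFn I)
  have e : ∀ z : Fin 3 → ℝ, wgt γ (rad3 z - t) * ksE 3 ξ (spt t z) =
      ∑ n ∈ Finset.range 4, ∑ I : Fin n → Fin 11,
        wgt γ (rad3 z - t) * (GammaList (List.ofFn I) ξ (spt t z)) ^ 2 := by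
    intro z
    simp only [ksE, Finset.mul_sum]
  rw [← ofReal_integral_eq_lintegral_ofReal]
  · congr 1
    simp only [e]
    rw [integral_finsetSum _ (fun n _ => integrable_finsetSum _ fun I _ => hi n I)]
    refine Finset.sum_congr rfl fun n _ => ?_
    rw [integral_finsetSum _ (fun I _ => hi n I)]
  · simp only [e]
    exact integrable_finsetSum _ fun n _ => integrable_finsetSum _ fun I _ => hi n I
  · exact Filter.Eventually.of_forall fun z =>
      mul_nonneg (by linarith [ks_wgt_ge γ (rad3 z - t)]) (ksE_nonneg _ _ _)

lemma ks_chart {ξ : (Fin 4 → ℝ) → ℝ} (h : ContDiff ℝ (⊤ : ℕ∞) ξ) (hsupp : HasCompactSupport ξ)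
    (γ t : ℝ)
    (Ψ : (Fin 3 → ℝ) → (Fin 3 → ℝ)) (Ψ' : (Fin 3 → ℝ) → (Fin 3 → ℝ) →L[ℝ] (Fin 3 → ℝ))
    (hΨ : ∀ s, HasFDerivAt Ψ (Ψ' s) s)
    (α β a : Fin 3 → ℝ) (hαβ : ∀ i, α i < β i) (ha : ∀ i, a i ∈ Set.Icc (α i) (β i))
    (hctrl : ∀ s, (∀ i, s i ∈ Set.Icc (α i) (β i)) → ∀ i, ∀ ℓ : (Fin 4 → ℝ) →L[ℝ] ℝ,
      (β i - α i) * |ℓ (spt 0 (Ψ' s (Pi.single i 1)))| ≤ 8 * ksS ℓ (spt t (Ψ s)))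
    (J W : ℝ) (hJ0 : 0 ≤ J) (hW0 : 0 ≤ W)
    (hJ : ∀ f : (Fin 3 → ℝ) → ENNReal, ENNReal.ofReal J *
      ∫⁻ s in Set.univ.pi (fun i => Set.Ioc (α i) (β i)), f (Ψ s) ≤ ∫⁻ z, f z)
    (hW : ∀ s, (∀ i, s i ∈ Set.Icc (α i) (β i)) → W ≤ 8 * wgt γ (rad3 (Ψ s) - t)) :
    W * J * ((β 0 - α 0) * (β 1 - α 1) * (β 2 - α 2)) * (ξ (spt t (Ψ a))) ^ 2 ≤
      8 * 97 ^ 3 * ∑ n ∈ Finset.range 4, ∑ I : Fin n → Fin 11, ∫ z : Fin 3 → ℝ,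
        wgt γ (rad3 z - t) * (GammaList (List.ofFn I) ξ (spt t z)) ^ 2 := by
  have hb := ks_box h t Ψ Ψ' hΨ α β a hαβ ha hctrl
  have h0 : ksE 0 ξ (spt t (Ψ a)) = (ξ (spt t (Ψ a))) ^ 2 := by
    simp [ksE, GammaList]
  rw [h0] at hb
  have hA : 0 ≤ ∑ n ∈ Finset.range 4, ∑ I : Fin n → Fin 11, ∫ z : Fin 3 → ℝ,
        wgt γ (rad3 z - t) * (GammaList (List.ofFn I) ξ (spt t z)) ^ 2 :=
    Finset.sum_nonneg fun _ _ => Finset.sum_nonneg fun _ _ => integral_nonneg fun z =>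
      mul_nonneg (by linarith [ks_wgt_ge γ (rad3 z - t)]) (sq_nonneg _)
  rw [← ENNReal.ofReal_le_ofReal_iff (by positivity)]
  have hmeas : MeasurableSet (Set.univ.pi (fun i : Fin 3 => Set.Ioc (α i) (β i))) :=
    MeasurableSet.univ_pi fun i => measurableSet_Ioc
  calc _ = ENNReal.ofReal W * (ENNReal.ofReal J * ENNReal.ofReal
        ((β 0 - α 0) * (β 1 - α 1) * (β 2 - α 2) * (ξ (spt t (Ψ a))) ^ 2)) := by
        rw [← ENNReal.ofReal_mul hJ0, ← ENNReal.ofReal_mul hW0]; congr 1; ring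
    _ ≤ ENNReal.ofReal W * (ENNReal.ofReal J * (97 ^ 3 *
        ∫⁻ s in Set.univ.pi (fun i => Set.Ioc (α i) (β i)),
        ENNReal.ofReal (ksE 3 ξ (spt t (Ψ s))))) :=
        mul_le_mul' le_rfl (mul_le_mul' le_rfl hb)
    _ = 97 ^ 3 * (ENNReal.ofReal J * ∫⁻ s in Set.univ.pi (fun i => Set.Ioc (α i) (β i)),
        ENNReal.ofReal W * ENNReal.ofReal (ksE 3 ξ (spt t (Ψ s)))) := by
        rw [lintegral_const_mul' _ _ ENNReal.ofReal_ne_top]; ring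
    _ ≤ 97 ^ 3 * (ENNReal.ofReal J * ∫⁻ s in Set.univ.pi (fun i => Set.Ioc (α i) (β i)),
        8 * ENNReal.ofReal (wgt γ (rad3 (Ψ s) - t) * ksE 3 ξ (spt t (Ψ s)))) := by
        refine mul_le_mul' le_rfl (mul_le_mul' le_rfl (setLIntegral_mono' hmeas fun s hs => ?_))
        have hs' : ∀ i, s i ∈ Set.Icc (α i) (β i) := fun i =>
          Set.Ioc_subset_Icc_self (hs i (Set.mem_univ i))
        rw [← ENNReal.ofReal_mul hW0, show (8 : ENNReal) = ENNReal.ofReal 8 by norm_num,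
          ← ENNReal.ofReal_mul (by norm_num), ← mul_assoc]
        exact ENNReal.ofReal_le_ofReal
          (mul_le_mul_of_nonneg_right (hW s hs') (ksE_nonneg _ _ _))
    _ = 97 ^ 3 * 8 * (ENNReal.ofReal J * ∫⁻ s in Set.univ.pi (fun i => Set.Ioc (α i) (β i)),
        ENNReal.ofReal (wgt γ (rad3 (Ψ s) - t) * ksE 3 ξ (spt t (Ψ s)))) := by
        rw [lintegral_const_mul' _ _ (by norm_num)]; ring
    _ ≤ 97 ^ 3 * 8 * ∫⁻ z : Fin 3 → ℝ, ENNReal.ofReal (wgt γ (rad3 z - t) * ksE 3 ξ (spt t z)) :=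
        mul_le_mul' le_rfl (hJ _)
    _ = _ := by
        rw [ks_int_E h hsupp, ENNReal.ofReal_mul (by norm_num)]
        congr 1
        norm_num

lemma ks_rad3_lip (z x : Fin 3 → ℝ) {L : ℝ} (h : ∀ i, |z i - x i| ≤ L) :
    |rad3 z - rad3 x| ≤ 2 * L := by
  have e : ∀ y : Fin 3 → ℝ, rad3 y = ‖WithLp.toLp 2 y‖ := by
    intro y
    rw [EuclideanSpace.norm_eq]
    simp [rad3]
  have hL : 0 ≤ L := (abs_nonneg _).trans (h 0)
  rw [e, e]
  refine (abs_norm_sub_norm_le _ _).trans ?_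
  rw [← WithLp.toLp_sub, ← e]
  unfold rad3
  rw [Real.sqrt_le_left (by positivity), Fin.sum_univ_three]
  have h' : ∀ i, ((z - x) i) ^ 2 ≤ L ^ 2 := fun i => by
    rw [← sq_abs]; exact pow_le_pow_left₀ (abs_nonneg _) (h i) 2
  nlinarith [h' 0, h' 1, h' 2, sq_nonneg L]

lemma ks_spt_single (i : Fin 3) : spt 0 (Pi.single i 1) = Pi.single i.succ 1 := by
  funext j
  fin_cases i <;> fin_cases j <;> simp [spt]

lemma ks_far {γ : ℝ} (hγ0 : 0 < γ) (hγ1 : γ ≤ 1 / 8) {ξ : (Fin 4 → ℝ) → ℝ}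
    (h : ContDiff ℝ (⊤ : ℕ∞) ξ) (hsupp : HasCompactSupport ξ) {t : ℝ} (ht : 0 ≤ t)
    (x : Fin 3 → ℝ) :
    wgt γ (rad3 x - t) * ((1 + |rad3 x - t|) / 4) ^ 3 * (ξ (spt t x)) ^ 2 ≤
      8 * 97 ^ 3 * ∑ n ∈ Finset.range 4, ∑ I : Fin n → Fin 11, ∫ z : Fin 3 → ℝ,
        wgt γ (rad3 z - t) * (GammaList (List.ofFn I) ξ (spt t z)) ^ 2 := by
  set L := (1 + |rad3 x - t|) / 4 with hL
  have hLpos : 0 < L := by positivity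
  have hd : ∀ s : Fin 3 → ℝ, (∀ i, s i ∈ Set.Icc (x i) (x i + L)) →
      |(rad3 s - t) - (rad3 x - t)| ≤ 2 * L := by
    intro s hs
    rw [sub_sub_sub_cancel_right]
    refine ks_rad3_lip s x fun i => ?_
    rw [abs_le]; constructor <;> linarith [(hs i).1, (hs i).2]
  have := ks_chart h hsupp γ t (fun s => s) (fun _ => ContinuousLinearMap.id ℝ _)
    (fun s => hasFDerivAt_id s) x (fun i => x i + L) x (fun i => by linarith)
    (fun i => ⟨le_rfl, by linarith⟩) ?_ 1 (wgt γ (rad3 x - t)) (by norm_num)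
    (by linarith [ks_wgt_ge γ (rad3 x - t)]) ?_ ?_
  · refine le_trans (le_of_eq ?_) this
    ring
  · intro s hs i ℓ
    have h1 := ks_pd ht s ℓ i
    have h2 := hd s hs
    have h3 : 2 * L ≤ 1 + |rad3 s - t| := by
      have := abs_sub_abs_le_abs_sub (rad3 x - t) (rad3 s - t)
      rw [abs_sub_comm (rad3 x - t) (rad3 s - t)] at this
      linarith
    have h4 := ks_S_nonneg ℓ (spt t s)
    have h5 := abs_nonneg (ℓ (Pi.single i.succ 1))
    simp only [ContinuousLinearMap.id_apply, ks_spt_single, add_sub_cancel_left]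
    nlinarith
  · intro f
    simp only [ENNReal.ofReal_one, one_mul]
    exact setLIntegral_le_lintegral _ _
  · intro s hs
    apply ks_wgt_comp hγ0 hγ1
    have := hd s hs
    linarith

noncomputable def ksSph (s : Fin 3 → ℝ) : Fin 3 → ℝ :=
  ![s 0 * Real.cos (s 1) * Real.cos (s 2), s 0 * Real.cos (s 1) * Real.sin (s 2),
    s 0 * Real.sin (s 1)]

noncomputable def ksMat (s : Fin 3 → ℝ) : Matrix (Fin 3) (Fin 3) ℝ :=
  !![Real.cos (s 1) * Real.cos (s 2), - (s 0 * Real.sin (s 1) * Real.cos (s 2)),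
      - (s 0 * Real.cos (s 1) * Real.sin (s 2));
    Real.cos (s 1) * Real.sin (s 2), - (s 0 * Real.sin (s 1) * Real.sin (s 2)),
      s 0 * Real.cos (s 1) * Real.cos (s 2);
    Real.sin (s 1), s 0 * Real.cos (s 1), 0]

noncomputable def ksSph' (s : Fin 3 → ℝ) : (Fin 3 → ℝ) →L[ℝ] (Fin 3 → ℝ) :=
  LinearMap.toContinuousLinearMap (Matrix.toLin' (ksMat s))

lemma ksSph_deriv (s : Fin 3 → ℝ) : HasFDerivAt ksSph (ksSph' s) s := by
  rw [hasFDerivAt_pi']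
  have p : ∀ i : Fin 3, HasFDerivAt (fun s : Fin 3 → ℝ => s i)
    (ContinuousLinearMap.proj (R := ℝ) (φ := fun _ : Fin 3 => ℝ) i) s := fun i => hasFDerivAt_apply i s
  intro i
  fin_cases i
  · have := ((p 0).mul (p 1).cos).mul (p 2).cos
    refine this.congr_fderiv ?_
    ext v
    simp [ksSph', ksMat, dotProduct, Fin.sum_univ_three]
    ring
  · have := ((p 0).mul (p 1).cos).mul (p 2).sin
    refine this.congr_fderiv ?_
    ext v
    simp [ksSph', ksMat, dotProduct, Fin.sum_univ_three]
    ring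
  · have := ((p 0).mul (p 1).sin)
    refine this.congr_fderiv ?_
    ext v
    simp [ksSph', ksMat, dotProduct, Fin.sum_univ_three]
    ring

lemma ksSph_det (s : Fin 3 → ℝ) : |(ksSph' s).det| = |s 0 ^ 2 * Real.cos (s 1)| := by
  have : (ksSph' s).det = (ksMat s).det := by
    simp only [ksSph', ContinuousLinearMap.det]
    rw [LinearMap.coe_toContinuousLinearMap, LinearMap.det_toLin']
  rw [this, Matrix.det_fin_three, ← abs_neg]
  congr 1
  simp [ksMat]
  have h1 := Real.sin_sq_add_cos_sq (s 1)
  have h2 := Real.sin_sq_add_cos_sq (s 2)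
  linear_combination (s 0 ^ 2 * Real.cos (s 1) * (Real.sin (s 2) ^ 2 + Real.cos (s 2) ^ 2)) * h1
    + s 0 ^ 2 * Real.cos (s 1) * h2

lemma ksSph_rad (s : Fin 3 → ℝ) (h : 0 ≤ s 0) : rad3 (ksSph s) = s 0 := by
  unfold rad3
  rw [Real.sqrt_eq_iff_mul_self_eq (Finset.sum_nonneg fun _ _ => sq_nonneg _) h]
  rw [Fin.sum_univ_three]
  simp [ksSph]
  have h1 := Real.sin_sq_add_cos_sq (s 1)
  have h2 := Real.sin_sq_add_cos_sq (s 2)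
  linear_combination (s 0 ^ 2) * h1 + s 0 ^ 2 * Real.cos (s 1) ^ 2 * h2

lemma ks_cos_ge {u : ℝ} (h : |u| ≤ 1) : 1 / 2 ≤ Real.cos u := by
  have h1 := Real.one_sub_sq_div_two_le_cos (x := u)
  have h2 : u ^ 2 ≤ 1 := (sq_le_one_iff_abs_le_one u).2 h
  linarith

lemma ksSph_inj {r L : ℝ} (hr : 0 < r) :
    Set.InjOn ksSph (Set.univ.pi
      (fun i => Set.Ioc ((![r, -1, -Real.pi] : Fin 3 → ℝ) i) ((![r + L, 1, Real.pi] : Fin 3 → ℝ) i))) := by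
  intro s hs s' hs' he
  have a0 := hs 0 (Set.mem_univ _)
  have a1 := hs 1 (Set.mem_univ _)
  have a2 := hs 2 (Set.mem_univ _)
  have b0 := hs' 0 (Set.mem_univ _)
  have b1 := hs' 1 (Set.mem_univ _)
  have b2 := hs' 2 (Set.mem_univ _)
  simp at a0 a1 a2 b0 b1 b2
  have e0 : s 0 = s' 0 := by
    rw [← ksSph_rad s (by linarith), he, ksSph_rad s' (by linarith)]
  have hpos : 0 < s 0 := by linarith
  have c0 := congrFun he 0
  have c1 := congrFun he 1
  have c2 := congrFun he 2
  simp [ksSph] at c0 c1 c2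
  rw [← e0] at c0 c1 c2
  have hpi := Real.pi_gt_three
  have e1 : s 1 = s' 1 := by
    have : Real.sin (s 1) = Real.sin (s' 1) := mul_left_cancel₀ hpos.ne' c2
    exact Real.injOn_sin ⟨by linarith, by linarith⟩ ⟨by linarith, by linarith⟩ this
  have hcos : 0 < s 0 * Real.cos (s 1) :=
    mul_pos hpos (by linarith [ks_cos_ge (u := s 1) (abs_le.2 ⟨by linarith, by linarith⟩)])
  rw [← e1] at c0 c1
  have d0 := mul_left_cancel₀ hcos.ne' c0
  have d1 := mul_left_cancel₀ hcos.ne' c1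
  have e2 : s 2 = s' 2 := by
    have x1 := Complex.arg_cos_add_sin_mul_I (θ := s 2) ⟨a2.1, a2.2⟩
    have x2 := Complex.arg_cos_add_sin_mul_I (θ := s' 2) ⟨b2.1, b2.2⟩
    rw [← x1, ← x2, ← Complex.ofReal_cos, ← Complex.ofReal_sin, ← Complex.ofReal_cos,
      ← Complex.ofReal_sin, d0, d1]
  funext i
  fin_cases i <;> assumption

noncomputable def ksP (σ : Equiv.Perm (Fin 3)) : (Fin 3 → ℝ) →L[ℝ] (Fin 3 → ℝ) :=
  ContinuousLinearMap.pi fun i => ContinuousLinearMap.proj (σ i)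

lemma ksP_apply (σ : Equiv.Perm (Fin 3)) (y : Fin 3 → ℝ) (i : Fin 3) : ksP σ y i = y (σ i) := rfl

lemma ksP_rad (σ : Equiv.Perm (Fin 3)) (y : Fin 3 → ℝ) : rad3 (ksP σ y) = rad3 y := by
  unfold rad3
  congr 1
  simp only [ksP_apply]
  exact Equiv.sum_comp σ (fun i => y i ^ 2)

lemma ksP_lintegral (σ : Equiv.Perm (Fin 3)) (f : (Fin 3 → ℝ) → ENNReal) :
    ∫⁻ z, f (ksP σ z) = ∫⁻ z, f z := by
  have h := volume_measurePreserving_piCongrLeft (fun _ : Fin 3 => ℝ) σ.symm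
  have e : ∀ z, MeasurableEquiv.piCongrLeft (fun _ : Fin 3 => ℝ) σ.symm z = ksP σ z := by
    intro z
    funext i
    rw [ksP_apply]
    have := MeasurableEquiv.piCongrLeft_apply_apply (β := fun _ : Fin 3 => ℝ) σ.symm z (σ i)
    simpa using this
  have := h.lintegral_comp_emb (MeasurableEquiv.measurableEmbedding _) f
  simpa only [e] using this

lemma ksSph_exists (x : Fin 3 → ℝ) (hr : 0 < rad3 x) :
    ∃ (σ : Equiv.Perm (Fin 3)) (a : Fin 3 → ℝ), a 0 = rad3 x ∧ |a 1| ≤ 1 ∧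
      a 2 ∈ Set.Icc (-Real.pi) Real.pi ∧ ksP σ (ksSph a) = x := by
  obtain ⟨k, hk⟩ := Finite.exists_min (fun i => x i ^ 2)
  set σ : Equiv.Perm (Fin 3) := Equiv.swap k 2 with hσ
  set y : Fin 3 → ℝ := ksP σ x with hy
  have hy2 : y 2 = x k := by simp [hy, ksP_apply, hσ]
  have hrad : rad3 y = rad3 x := ksP_rad σ x
  have hsq := ks_rad3_sq y
  rw [hrad] at hsq
  have hsmall : 3 * y 2 ^ 2 ≤ rad3 x ^ 2 := by
    rw [ks_rad3_sq x, hy2]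
    linarith [hk 0, hk 1, hk 2]
  set r := rad3 x with hrr
  set φ := Real.arcsin (y 2 / r) with hφ
  set w : ℂ := ⟨y 0, y 1⟩ with hw
  have hq : 3 * (y 2 / r) ^ 2 ≤ 1 := by
    rw [div_pow, ← mul_div_assoc, div_le_one (by positivity)]; exact hsmall
  have hq1 : |y 2 / r| ≤ 3 / 4 := by
    apply abs_le_of_sq_le_sq _ (by norm_num)
    nlinarith
  rw [abs_le] at hq1
  have hsin : Real.sin φ = y 2 / r := Real.sin_arcsin (by linarith) (by linarith)
  have hs1 : 3 / 4 ≤ Real.sin 1 := by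
    have := Real.sin_gt_sub_cube (x := 1) (by norm_num)
    linarith
  have hpi := Real.pi_gt_three
  have hφ1 : |φ| ≤ 1 := by
    rw [abs_le]
    constructor
    · rw [hφ, Real.le_arcsin_iff_sin_le ⟨by linarith, by linarith⟩ ⟨by linarith, by linarith⟩,
        Real.sin_neg]
      linarith
    · rw [hφ, Real.arcsin_le_iff_le_sin ⟨by linarith, by linarith⟩ ⟨by linarith, by linarith⟩]
      linarith
  have hcos : r * Real.cos φ = ‖w‖ := by
    have hc : 0 ≤ r * Real.cos φ := mul_nonneg hr.le (by linarith [ks_cos_ge hφ1])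
    rw [← sq_eq_sq₀ hc (norm_nonneg _), Complex.sq_norm, Complex.normSq_mk]
    have h1 := Real.sin_sq_add_cos_sq φ
    have h2 : r * Real.sin φ = y 2 := by rw [hsin]; field_simp
    have h3 : (r * Real.sin φ) ^ 2 = y 2 ^ 2 := by rw [h2]
    linear_combination r ^ 2 * h1 - h3 + hsq
  refine ⟨σ, ![r, φ, w.arg], by simp, by simpa using hφ1, ?_, ?_⟩
  · simp
    exact ⟨(Complex.neg_pi_lt_arg w).le, Complex.arg_le_pi w⟩
  · have : ksSph ![r, φ, w.arg] = y := by
      funext i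
      fin_cases i
      · simp [ksSph]; rw [hcos, Complex.norm_mul_cos_arg]
      · simp [ksSph]; rw [hcos, Complex.norm_mul_sin_arg]
      · simp [ksSph]; rw [hsin]; field_simp
    rw [this, hy]
    funext i
    rw [ksP_apply, ksP_apply, hσ, Equiv.swap_apply_self]

lemma ks_spt_lin (a b : ℝ) (u v : Fin 3 → ℝ) : spt 0 (a • u + b • v) = a • spt 0 u + b • spt 0 v := by
  funext j
  fin_cases j <;> simp [spt]

lemma ks_spt_sum (v : Fin 3 → ℝ) : spt 0 v = ∑ i : Fin 3, v i • (Pi.single i.succ 1 : Fin 4 → ℝ) := by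
  funext j
  fin_cases j <;> simp [spt, Fin.sum_univ_three]

lemma ks_rot (t : ℝ) (z : Fin 3 → ℝ) (ℓ : (Fin 4 → ℝ) →L[ℝ] ℝ) (i j : Fin 3) :
    |ℓ (spt 0 (z i • Pi.single j 1 - z j • Pi.single i 1))| ≤ ksS ℓ (spt t z) := by
  have key : ∀ (i j : Fin 3) (k : Fin 11),
      spt 0 (z i • Pi.single j 1 - z j • Pi.single i 1) = minkVF k (spt t z) →
      |ℓ (spt 0 (z i • Pi.single j 1 - z j • Pi.single i 1))| ≤ ksS ℓ (spt t z) := by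
    intro i j k h
    rw [h]; exact ks_le_S _ _ _
  have symm : ∀ i j : Fin 3, |ℓ (spt 0 (z i • Pi.single j 1 - z j • Pi.single i 1))| ≤ ksS ℓ (spt t z) →
      |ℓ (spt 0 (z j • Pi.single i 1 - z i • Pi.single j 1))| ≤ ksS ℓ (spt t z) := by
    intro i j h
    have e : spt 0 (z j • Pi.single i 1 - z i • Pi.single j 1) =
        - spt 0 (z i • Pi.single j 1 - z j • Pi.single i 1) := by
      funext k
      fin_cases k <;> simp [spt]
    rw [e, map_neg, abs_neg]; exact h
  have diag : ∀ i : Fin 3, |ℓ (spt 0 (z i • Pi.single i 1 - z i • Pi.single i 1))| ≤ ksS ℓ (spt t z) := by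
    intro i
    have : spt 0 (z i • Pi.single i 1 - z i • Pi.single i 1) = 0 := by
      funext k
      fin_cases k <;> simp [spt]
    rw [this]; simp; exact ks_S_nonneg _ _
  have h01 := key 0 1 4 (by funext k; fin_cases k <;> simp [spt, minkVF])
  have h02 := key 0 2 5 (by funext k; fin_cases k <;> simp [spt, minkVF])
  have h12 := key 1 2 6 (by funext k; fin_cases k <;> simp [spt, minkVF])
  fin_cases i <;> fin_cases j
  · exact diag 0
  · exact h01
  · exact h02
  · exact symm _ _ h01
  · exact diag 1
  · exact h12
  · exact symm _ _ h02
  · exact symm _ _ h12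
  · exact diag 2

lemma ks_near {γ : ℝ} (hγ0 : 0 < γ) (hγ1 : γ ≤ 1 / 8) {ξ : (Fin 4 → ℝ) → ℝ}
    (h : ContDiff ℝ (⊤ : ℕ∞) ξ) (hsupp : HasCompactSupport ξ) {t : ℝ} (ht : 0 ≤ t)
    (x : Fin 3 → ℝ) (hr : 0 < rad3 x) :
    wgt γ (rad3 x - t) * (rad3 x ^ 2 / 2) * ((1 + |rad3 x - t|) / 4) * (ξ (spt t x)) ^ 2 ≤
      8 * 97 ^ 3 * ∑ n ∈ Finset.range 4, ∑ I : Fin n → Fin 11, ∫ z : Fin 3 → ℝ,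
        wgt γ (rad3 z - t) * (GammaList (List.ofFn I) ξ (spt t z)) ^ 2 := by
  obtain ⟨σ, a, ha0, ha1, ha2, hax⟩ := ksSph_exists x hr
  set r := rad3 x with hrr
  set L := (1 + |r - t|) / 4 with hL
  have hLpos : 0 < L := by positivity
  have hpi := Real.pi_gt_three
  have hpi4 := Real.pi_le_four
  rw [abs_le] at ha1
  set α : Fin 3 → ℝ := ![r, -1, -Real.pi] with hα
  set β : Fin 3 → ℝ := ![r + L, 1, Real.pi] with hβ
  have hrad : ∀ s : Fin 3 → ℝ, (∀ i, s i ∈ Set.Icc (α i) (β i)) →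
      rad3 (ksP σ (ksSph s)) = s 0 ∧ r ≤ s 0 ∧ s 0 ≤ r + L ∧ |s 1| ≤ 1 := by
    intro s hs
    have h0 := hs 0
    have h1 := hs 1
    simp [hα, hβ] at h0 h1
    refine ⟨?_, h0.1, h0.2, abs_le.2 h1⟩
    rw [ksP_rad, ksSph_rad _ (by linarith)]
  have hd : ∀ s : Fin 3 → ℝ, (∀ i, s i ∈ Set.Icc (α i) (β i)) →
      |(rad3 (ksP σ (ksSph s)) - t) - (r - t)| ≤ L := by
    intro s hs
    obtain ⟨e, h1, h2, -⟩ := hrad s hs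
    rw [e, abs_le]; constructor <;> linarith
  have := ks_chart h hsupp γ t (fun s => ksP σ (ksSph s)) (fun s => (ksP σ).comp (ksSph' s))
    (fun s => (ksP σ).hasFDerivAt.comp s (ksSph_deriv s)) α β a ?_ ?_ ?_ (r ^ 2 / 2)
    (wgt γ (r - t)) (by positivity) (by linarith [ks_wgt_ge γ (r - t)]) ?_ ?_
  · rw [hax] at this
    refine le_trans ?_ this
    have hw := ks_wgt_ge γ (r - t)
    have : L ≤ (β 0 - α 0) * (β 1 - α 1) * (β 2 - α 2) := by
      simp [hα, hβ]
      nlinarith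
    gcongr
  · intro i; fin_cases i <;> simp [hα, hβ] <;> linarith
  · intro i
    fin_cases i
    · simp [hα, hβ, ha0]; linarith
    · simpa [hα, hβ] using ha1
    · simpa [hα, hβ] using ha2
  · intro s hs i ℓ
    set z := ksP σ (ksSph s) with hz
    have hzy : ∀ k, z (σ.symm k) = ksSph s k := fun k => by simp [hz, ksP_apply]
    have hS := ks_S_nonneg ℓ (spt t z)
    have ext3 : ∀ u v : Fin 3 → ℝ, (∀ k, u (σ.symm k) = v (σ.symm k)) → u = v := by
      intro u v huv
      funext j
      have := huv (σ j)
      simpa using this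
    have hP : ∀ (v : Fin 3 → ℝ) k, ksP σ v (σ.symm k) = v k := fun v k => by simp [ksP_apply]
    have hsingle : ∀ j k : Fin 3, (Pi.single (σ.symm j) (1 : ℝ) : Fin 3 → ℝ) (σ.symm k) =
        if k = j then 1 else 0 := fun j k => by
      simp [Pi.single_apply]
    have hM : ∀ i k, ksSph' s (Pi.single i 1) k = ksMat s k i := fun i k => by
      simp [ksSph']
    show (β i - α i) * |ℓ (spt 0 (ksP σ (ksSph' s (Pi.single i 1))))| ≤ 8 * ksS ℓ (spt t z)
    fin_cases i
    · obtain ⟨-, -, -, -⟩ := hrad s hs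
      have h2 := hd s hs
      have h3 : 3 * L ≤ 1 + |rad3 z - t| := by
        have := abs_sub_abs_le_abs_sub (r - t) (rad3 z - t)
        rw [abs_sub_comm (r - t) (rad3 z - t)] at this
        linarith
      have hb : ∀ k, |ksMat s k 0| ≤ 1 := by
        have c1 := Real.abs_cos_le_one (s 1)
        have c2 := Real.abs_cos_le_one (s 2)
        have s1 := Real.abs_sin_le_one (s 1)
        have s2 := Real.abs_sin_le_one (s 2)
        intro k
        fin_cases k
        · simp [ksMat, abs_mul]; exact mul_le_one₀ c1 (abs_nonneg _) c2
        · simp [ksMat, abs_mul]; exact mul_le_one₀ c1 (abs_nonneg _) s2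
        · simpa [ksMat] using s1
      have hbound : |ℓ (spt 0 (ksP σ (ksSph' s (Pi.single 0 1))))| ≤
          ∑ i : Fin 3, |ℓ (Pi.single i.succ 1)| := by
        rw [ks_spt_sum, map_sum]
        refine (Finset.abs_sum_le_sum_abs _ _).trans (Finset.sum_le_sum fun k _ => ?_)
        rw [map_smul, smul_eq_mul, abs_mul, ksP_apply, hM]
        exact mul_le_of_le_one_left (abs_nonneg _) (hb _)
      have hpd : ∀ i : Fin 3, 3 * L * |ℓ (Pi.single i.succ 1)| ≤ 2 * ksS ℓ (spt t z) := fun i =>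
        (mul_le_mul_of_nonneg_right h3 (abs_nonneg _)).trans (ks_pd ht z ℓ i)
      rw [Fin.sum_univ_three] at hbound
      have hLb := mul_le_mul_of_nonneg_left hbound hLpos.le
      have p0 := hpd 0
      have p1 := hpd 1
      have p2 := hpd 2
      have e : β 0 - α 0 = L := by simp [hα, hβ]
      show (β 0 - α 0) * |ℓ (spt 0 (ksP σ (ksSph' s (Pi.single 0 1))))| ≤ _
      rw [e]
      linarith
    · have hV : ksP σ (ksSph' s (Pi.single 1 1)) =
          Real.cos (s 2) • (z (σ.symm 0) • Pi.single (σ.symm 2) 1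
            - z (σ.symm 2) • Pi.single (σ.symm 0) 1)
          + Real.sin (s 2) • (z (σ.symm 1) • Pi.single (σ.symm 2) 1
            - z (σ.symm 2) • Pi.single (σ.symm 1) 1) := by
        apply ext3
        intro k
        rw [hP, hM]
        simp only [Pi.add_apply, Pi.smul_apply, Pi.sub_apply, hsingle, hzy]
        have h2 := Real.sin_sq_add_cos_sq (s 2)
        fin_cases k
        · simp [ksMat, ksSph]; ring
        · simp [ksMat, ksSph]; ring
        · simp [ksMat, ksSph]
          linear_combination (- s 0 * Real.cos (s 1)) * h2
      show (β 1 - α 1) * |ℓ (spt 0 (ksP σ (ksSph' s (Pi.single 1 1))))| ≤ _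
      have e : β 1 - α 1 = 2 := by simp [hα, hβ]; norm_num
      rw [e, hV, ks_spt_lin, map_add, map_smul, map_smul, smul_eq_mul, smul_eq_mul]
      have r1 := ks_rot t z ℓ (σ.symm 0) (σ.symm 2)
      have r2 := ks_rot t z ℓ (σ.symm 1) (σ.symm 2)
      have q1 := (mul_le_of_le_one_left (abs_nonneg _) (Real.abs_cos_le_one (s 2))).trans r1
      have q2 := (mul_le_of_le_one_left (abs_nonneg _) (Real.abs_sin_le_one (s 2))).trans r2
      rw [← abs_mul] at q1 q2
      refine (mul_le_mul_of_nonneg_left (abs_add_le _ _) (by norm_num)).trans ?_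
      linarith
    · have hV : ksP σ (ksSph' s (Pi.single 2 1)) =
          (z (σ.symm 0) • Pi.single (σ.symm 1) 1 - z (σ.symm 1) • Pi.single (σ.symm 0) 1) := by
        apply ext3
        intro k
        rw [hP, hM]
        simp only [Pi.smul_apply, Pi.sub_apply, hsingle, hzy]
        fin_cases k <;> simp [ksMat, ksSph]
      show (β 2 - α 2) * |ℓ (spt 0 (ksP σ (ksSph' s (Pi.single 2 1))))| ≤ _
      rw [hV]
      have r1 := ks_rot t z ℓ (σ.symm 0) (σ.symm 1)
      have e : β 2 - α 2 ≤ 8 := by simp [hα, hβ]; linarith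
      exact mul_le_mul e r1 (abs_nonneg _) (by norm_num)
  · intro f
    rw [← ksP_lintegral σ f]
    have hmeas : MeasurableSet (Set.univ.pi (fun i : Fin 3 => Set.Ioc (α i) (β i))) :=
      MeasurableSet.univ_pi fun i => measurableSet_Ioc
    have hcv := lintegral_image_eq_lintegral_abs_det_fderiv_mul volume hmeas
      (fun s _ => (ksSph_deriv s).hasFDerivWithinAt) (ksSph_inj (L := L) hr) (fun z => f (ksP σ z))
    refine le_trans ?_ (setLIntegral_le_lintegral
      (ksSph '' Set.univ.pi (fun i : Fin 3 => Set.Ioc (α i) (β i))) _)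
    rw [hcv, ← lintegral_const_mul' _ _ ENNReal.ofReal_ne_top]
    refine setLIntegral_mono' hmeas fun s hs => ?_
    refine mul_le_mul' (ENNReal.ofReal_le_ofReal ?_) le_rfl
    obtain ⟨-, h1, -, h3⟩ := hrad s fun i => Set.Ioc_subset_Icc_self (hs i (Set.mem_univ i))
    rw [ksSph_det]
    refine le_trans ?_ (le_abs_self _)
    have h4 := ks_cos_ge h3
    have h5 : r ^ 2 ≤ s 0 ^ 2 := pow_le_pow_left₀ hr.le h1 2
    nlinarith [sq_nonneg (s 0), sq_nonneg r]
  · intro s hs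
    apply ks_wgt_comp hγ0 hγ1
    have := hd s hs
    linarith

lemma ks_main {γ : ℝ} (hγ0 : 0 < γ) (hγ1 : γ ≤ 1 / 8) {ξ : (Fin 4 → ℝ) → ℝ}
    (h : ContDiff ℝ (⊤ : ℕ∞) ξ) (hsupp : HasCompactSupport ξ) {t : ℝ} (ht : 0 ≤ t)
    (x : Fin 3 → ℝ) :
    wgt γ (rad3 x - t) * (1 + t + rad3 x) ^ 2 * (1 + |rad3 x - t|) * (ξ (spt t x)) ^ 2 ≤
      10 ^ 12 * ∑ n ∈ Finset.range 4, ∑ I : Fin n → Fin 11, ∫ z : Fin 3 → ℝ,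
        wgt γ (rad3 z - t) * (GammaList (List.ofFn I) ξ (spt t z)) ^ 2 := by
  set A := ∑ n ∈ Finset.range 4, ∑ I : Fin n → Fin 11, ∫ z : Fin 3 → ℝ,
        wgt γ (rad3 z - t) * (GammaList (List.ofFn I) ξ (spt t z)) ^ 2 with hAdef
  have hA : 0 ≤ A :=
    Finset.sum_nonneg fun _ _ => Finset.sum_nonneg fun _ _ => integral_nonneg fun z =>
      mul_nonneg (by linarith [ks_wgt_ge γ (rad3 z - t)]) (sq_nonneg _)
  have hr := ks_rad3_nonneg x
  have hw := ks_wgt_ge γ (rad3 x - t)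
  have hq := abs_nonneg (rad3 x - t)
  by_cases hc : 1 + t + rad3 x ≤ 10 * (1 + |rad3 x - t|)
  · have h1 := ks_far hγ0 hγ1 h hsupp ht x
    rw [← hAdef] at h1
    calc _ ≤ wgt γ (rad3 x - t) * (10 * (1 + |rad3 x - t|)) ^ 2 * (1 + |rad3 x - t|)
          * (ξ (spt t x)) ^ 2 := by gcongr
      _ = 6400 * (wgt γ (rad3 x - t) * ((1 + |rad3 x - t|) / 4) ^ 3 * (ξ (spt t x)) ^ 2) := by ring
      _ ≤ 6400 * (8 * 97 ^ 3 * A) := by gcongr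
      _ ≤ _ := by nlinarith
  · push Not at hc
    have h2 : t ≤ rad3 x + |rad3 x - t| := by linarith [neg_abs_le (rad3 x - t)]
    have h3 : 1 + t + rad3 x ≤ 4 * rad3 x := by linarith
    have hpos : 0 < rad3 x := by linarith
    have h1 := ks_near hγ0 hγ1 h hsupp ht x hpos
    rw [← hAdef] at h1
    calc _ ≤ wgt γ (rad3 x - t) * (4 * rad3 x) ^ 2 * (1 + |rad3 x - t|)
          * (ξ (spt t x)) ^ 2 := by gcongr
      _ = 128 * (wgt γ (rad3 x - t) * (rad3 x ^ 2 / 2) * ((1 + |rad3 x - t|) / 4)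
            * (ξ (spt t x)) ^ 2) := by ring
      _ ≤ 128 * (8 * 97 ^ 3 * A) := by gcongr
      _ ≤ _ := by nlinarith

lemma ks_sqrt_sum {ι : Type*} (s : Finset ι) (f : ι → ℝ) (hf : ∀ i, 0 ≤ f i) :
    Real.sqrt (∑ i ∈ s, f i) ≤ ∑ i ∈ s, Real.sqrt (f i) := by
  rw [Real.sqrt_le_left (Finset.sum_nonneg fun _ _ => Real.sqrt_nonneg _)]
  calc ∑ i ∈ s, f i = ∑ i ∈ s, (Real.sqrt (f i)) ^ 2 :=
        Finset.sum_congr rfl fun i _ => (Real.sq_sqrt (hf i)).symm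
    _ ≤ _ := Finset.sum_sq_le_sq_sum_of_nonneg fun i _ => Real.sqrt_nonneg _

/-- Weighted Klainerman–Sobolev inequality: for `γ ∈ (0,1/8]` there is
a constant `C` such that for every `ξ ∈ C_c^∞(ℝ^{1+3})`, every `t ≥ 0` and `x ∈ ℝ³`,
`|ξ(t,x)| (1+t+|x|) (1+||x|−t|)^{1/2} w(|x|−t)^{1/2}` is bounded by `C` times the sum of
the weighted `L²(ℝ³)` norms of `Γ^I ξ(t,·)` over all compositions of at most three
Minkowskian commuting vector fields. -/
theorem stmt6 (γ : ℝ) (hγ0 : 0 < γ) (hγ1 : γ ≤ 1 / 8) :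
    ∃ C > (0 : ℝ), ∀ ξ : (Fin 4 → ℝ) → ℝ, ContDiff ℝ (⊤ : ℕ∞) ξ → HasCompactSupport ξ →
      ∀ t : ℝ, 0 ≤ t → ∀ x : Fin 3 → ℝ,
        |ξ (spt t x)| * (1 + t + rad3 x) * (1 + |rad3 x - t|) ^ ((1 : ℝ) / 2)
            * (wgt γ (rad3 x - t)) ^ ((1 : ℝ) / 2)
          ≤ C * ∑ n ∈ Finset.range 4, ∑ I : Fin n → Fin 11,
              Real.sqrt (∫ z : Fin 3 → ℝ,
                wgt γ (rad3 z - t) * (GammaList (List.ofFn I) ξ (spt t z)) ^ 2) := by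

  refine ⟨10 ^ 6, by norm_num, ?_⟩
  intro ξ h hsupp t ht x
  have hm := ks_main hγ0 hγ1 h hsupp ht x
  have hr := ks_rad3_nonneg x
  have hw := ks_wgt_ge γ (rad3 x - t)
  have hpos : ∀ (n : ℕ) (I : Fin n → Fin 11), 0 ≤ ∫ z : Fin 3 → ℝ,
      wgt γ (rad3 z - t) * (GammaList (List.ofFn I) ξ (spt t z)) ^ 2 := fun n I =>
    integral_nonneg fun z =>
      mul_nonneg (by linarith [ks_wgt_ge γ (rad3 z - t)]) (sq_nonneg _)
  have hs : Real.sqrt (∑ n ∈ Finset.range 4, ∑ I : Fin n → Fin 11, ∫ z : Fin 3 → ℝ,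
        wgt γ (rad3 z - t) * (GammaList (List.ofFn I) ξ (spt t z)) ^ 2) ≤
      ∑ n ∈ Finset.range 4, ∑ I : Fin n → Fin 11, Real.sqrt (∫ z : Fin 3 → ℝ,
        wgt γ (rad3 z - t) * (GammaList (List.ofFn I) ξ (spt t z)) ^ 2) :=
    (ks_sqrt_sum _ _ fun n => Finset.sum_nonneg fun I _ => hpos n I).trans
      (Finset.sum_le_sum fun n _ => ks_sqrt_sum _ _ fun I => hpos n I)
  refine le_trans ?_ (mul_le_mul_of_nonneg_left hs (by norm_num))
  rw [← Real.sqrt_eq_rpow, ← Real.sqrt_eq_rpow]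
  have e : (10 : ℝ) ^ 6 = Real.sqrt (10 ^ 12) := by
    rw [show (10 : ℝ) ^ 12 = (10 ^ 6) ^ 2 by norm_num, Real.sqrt_sq (by norm_num)]
  rw [e, ← Real.sqrt_mul (by norm_num)]
  apply Real.le_sqrt_of_sq_le
  refine le_trans (le_of_eq ?_) hm
  rw [mul_pow, mul_pow, mul_pow, sq_abs, Real.sq_sqrt (by positivity), Real.sq_sqrt (by linarith)]
  ring
end
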